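/- arXiv:math/0409554 — 2 statements merged into one kernel-verified Lean document; each statement's English description precedes it below -/
import Mathlib

section
/- Fix integers 1 ≤ p ≤ q and a real number s. For each integer n large enough, let x_n > 0 be the unique positive solution of n − p = x_n + s√(2x_n), and let μ_n = (n−p)^p with H_n the corresponding strip hook product. Then lim_{n→∞} (2x_n)^{−p(q−p)/2} · E_{x_n, p}( 1_{λ⊇μ_n} · H_n(λ) ) = [ ∫_{[s,∞)^p} Δ_p(ξ)² ∏_{i=1}^p (ξ_i − s)^{q−p} e^{−ξ_i²} dξ ] / [ ∫_{ℝ^p} Δ_p(ξ)² ∏_{i=1}^p e^{−ξ_i²} dξ ]. -/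
open MeasureTheory Filter Real
open scoped BigOperators Topology

noncomputable section

/-- Hook length of the (0-indexed) cell `c` in the Young diagram `μ`. -/
def hookLen (μ : YoungDiagram) (c : ℕ × ℕ) : ℕ :=
  μ.rowLen c.1 + μ.colLen c.2 - c.1 - c.2 - 1

/-- Product of all hook lengths of `μ`. -/
def hookProd (μ : YoungDiagram) : ℕ := ∏ c ∈ μ.cells, hookLen μ c

/-- Number of semistandard Young tableaux of shape `μ` with entries in `{0, …, q-1}`. -/
def numSSYT (μ : YoungDiagram) (q : ℕ) : ℕ :=
  Set.ncard {T : SemistandardYoungTableau μ | ∀ c ∈ μ.cells, T c.1 c.2 < q}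

/-- Number of standard Young tableaux of shape `μ`, via the hook length formula. -/
def fSYT (μ : YoungDiagram) : ℝ := (Nat.factorial μ.card : ℝ) / (hookProd μ : ℝ)

/-- The probability `P^{ℓ,p}` of a partition `μ` of `ℓ`. -/
def Pword (ℓ p : ℕ) (μ : YoungDiagram) : ℝ :=
  fSYT μ * (numSSYT μ p : ℝ) / (p : ℝ) ^ ℓ

/-- The expectation `E^{ℓ,p}` of a function `g` of the partition. -/
def Eword (ℓ p : ℕ) (g : YoungDiagram → ℝ) : ℝ :=
  ∑' μ : YoungDiagram, if μ.card = ℓ then Pword ℓ p μ * g μ else 0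

/-- The expectation `E_{x,p}` with respect to the Poissonized measure `P_{x,p}`. -/
def Epois (x : ℝ) (p : ℕ) (g : YoungDiagram → ℝ) : ℝ :=
  ∑' μ : YoungDiagram,
    Real.exp (-(p * x)) * (p * x) ^ μ.card / (Nat.factorial μ.card : ℝ) *
      Pword μ.card p μ * g μ

/-- Pochhammer symbol `(x)_m = x (x+1) ⋯ (x+m-1)`. -/
def pochRe (x : ℝ) (m : ℕ) : ℝ := ∏ j ∈ Finset.range m, (x + j)

/-- `(x)_κ = ∏_i (x + 1 - i)_{κ_i}` (with `i` 1-indexed). -/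
def pochPart (x : ℝ) (μ : YoungDiagram) : ℝ :=
  ∏ i ∈ Finset.range (μ.colLen 0), pochRe (x - i) (μ.rowLen i)

/-- Strip hook product `H(λ) = ∏_{(i,j) ∈ λ, n-q < j ≤ n-p} h^λ_{ij}` (1-indexed `j`). -/
def Hstrip (n p q : ℕ) (μ : YoungDiagram) : ℕ :=
  ∏ c ∈ μ.cells.filter (fun c => n - q ≤ c.2 ∧ c.2 < n - p), hookLen μ c

/-- The indicator `1_{λ ⊇ (n-p)^p}`. -/
def indSup (n p : ℕ) (μ : YoungDiagram) : ℝ :=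
  if ∀ i < p, n - p ≤ μ.rowLen i then 1 else 0

/-- Vandermonde determinant `Δ_p(x) = ∏_{i<j} (x_i - x_j)`. -/
def vdm {p : ℕ} (x : Fin p → ℝ) : ℝ :=
  ∏ i : Fin p, ∏ j ∈ Finset.Ioi i, (x i - x j)

/-!
The beta-numbers `λ_i + p - i` turn a partition with at most `p` parts into `p` distinct natural
numbers. By the determinant formula for `s_λ(1^p)` and the hook length identity
`h^λ Δ(b) = ∏ b_i!`, the Poissonized measure becomes the law of `p` i.i.d. Poisson variables
weighted by the squared Vandermonde determinant, and once all rows reach column `n - p` the strip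
hook product becomes a product of a one-variable weight over the beta-numbers. Andréief's identity
then writes the expectation as a Hankel determinant of truncated Poisson moments. After centring by
`x_n` and scaling by `√(2 x_n)` the Poisson variable converges weakly to the Gaussian of density
`π^{-1/2} exp (-ξ²)`, with exponential tails uniform in `n`, so these moments converge. Andréief's
identity applied backwards gives the numerator of the limit; orthogonality of the Hermite
polynomials evaluates the denominator.
-/

section BetaNumbers

open Finset

variable {p : ℕ}

/-- The beta-numbers (shifted parts) `λ_{p-i} + i` of a partition `λ` with at most `p` parts,
listed in increasing order; `i.rev` is the row whose part is shifted by `i`. -/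
def beta (p : ℕ) (μ : YoungDiagram) (i : Fin p) : ℕ := μ.rowLen i.rev + i

/-- The Young diagram with beta-numbers `b`. For `b` strictly increasing, row `i.rev` has length
`b i - i`; the quantifier over all rows above makes the set of cells a diagram for every `b`. -/
def ofBeta (b : Fin p → ℕ) : YoungDiagram where
  cells := {c ∈ range p ×ˢ range (∑ i, b i) | ∀ i : Fin p, i.rev ≤ c.1 → c.2 + i < b i}
  isLowerSet := by
    rintro ⟨k, j⟩ ⟨k', j'⟩ hle hc
    simp only [Prod.mk_le_mk] at hle
    simp only [coe_filter, mem_product, mem_range, Set.mem_ofPred_eq] at hc ⊢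
    refine ⟨⟨by omega, by omega⟩, fun i hi ↦ ?_⟩
    have := hc.2 i (hi.trans hle.1)
    omega

lemma exists_fin_rev_eq {k : ℕ} (hk : k < p) : ∃ i : Fin p, (i.rev : ℕ) = k :=
  ⟨Fin.rev ⟨k, hk⟩, by simp⟩

lemma mem_ofBeta {b : Fin p → ℕ} {k j : ℕ} :
    (k, j) ∈ ofBeta b ↔ k < p ∧ ∀ i : Fin p, i.rev ≤ k → j + i < b i := by
  rw [← YoungDiagram.mem_cells]
  simp only [ofBeta, mem_filter, mem_product, mem_range]
  refine ⟨fun h ↦ ⟨h.1.1, h.2⟩, fun h ↦ ⟨⟨h.1, ?_⟩, h.2⟩⟩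
  obtain ⟨i, hi⟩ := exists_fin_rev_eq h.1
  calc j ≤ j + i := Nat.le_add_right _ _
    _ < b i := h.2 i hi.le
    _ ≤ ∑ i, b i := single_le_sum (fun _ _ ↦ Nat.zero_le _) (mem_univ i)

lemma add_val_le_add_val_of_strictMono {b : Fin p → ℕ} (hb : StrictMono b) {i j : Fin p}
    (hij : i ≤ j) : b i + j ≤ b j + i := by
  have hmono : Monotone fun i : Fin p ↦ (b i : ℤ) - i := by
    cases p with
    | zero => exact Subsingleton.monotone _
    | succ p =>
      refine Fin.monotone_iff_le_succ.2 fun i ↦ ?_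
      have := hb i.castSucc_lt_succ
      simp only [Fin.val_castSucc, Fin.val_succ]
      omega
  have := hmono hij
  simp only at this
  omega

lemma val_le_of_strictMono {b : Fin p → ℕ} (hb : StrictMono b) (i : Fin p) : (i : ℕ) ≤ b i := by
  have := add_val_le_add_val_of_strictMono hb (i := ⟨0, i.pos⟩) (j := i) (Nat.zero_le _)
  simp only at this
  omega

lemma rev_mem_ofBeta {b : Fin p → ℕ} (hb : StrictMono b) {i : Fin p} {j : ℕ} :
    ((i.rev : ℕ), j) ∈ ofBeta b ↔ j + i < b i := by
  refine mem_ofBeta.trans ⟨fun h ↦ h.2 i le_rfl, fun h ↦ ⟨i.rev.2, fun k hk ↦ ?_⟩⟩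
  have := add_val_le_add_val_of_strictMono hb (Fin.rev_le_rev.1 hk)
  omega

lemma beta_ofBeta {b : Fin p → ℕ} (hb : StrictMono b) : beta p (ofBeta b) = b := by
  funext i
  have hrow : (ofBeta b).rowLen i.rev = b i - i := by
    refine eq_of_forall_lt_iff fun j ↦ ?_
    rw [← YoungDiagram.mem_iff_lt_rowLen, rev_mem_ofBeta hb]
    omega
  rw [beta, hrow, Nat.sub_add_cancel (val_le_of_strictMono hb i)]

lemma rowLen_ofBeta_eq_zero (b : Fin p → ℕ) : (ofBeta b).rowLen p = 0 := by
  by_contra h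
  have hmem : (p, 0) ∈ ofBeta b := YoungDiagram.mem_iff_lt_rowLen.2 (Nat.pos_of_ne_zero h)
  exact lt_irrefl p (mem_ofBeta.1 hmem).1

lemma beta_strictMono (μ : YoungDiagram) : StrictMono (beta p μ) := by
  intro i j hij
  have := μ.rowLen_anti _ _ (Fin.rev_le_rev.2 hij.le)
  simp only [beta]
  have : (i : ℕ) < j := hij
  omega

lemma ofBeta_beta {μ : YoungDiagram} (hμ : μ.rowLen p = 0) : ofBeta (beta p μ) = μ := by
  refine SetLike.ext fun ⟨k, j⟩ ↦ ?_
  rcases lt_or_ge k p with hk | hk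
  · obtain ⟨i, rfl⟩ := exists_fin_rev_eq hk
    rw [rev_mem_ofBeta (beta_strictMono μ), beta, YoungDiagram.mem_iff_lt_rowLen]
    omega
  · have := μ.rowLen_anti _ _ hk
    rw [mem_ofBeta, YoungDiagram.mem_iff_lt_rowLen]
    omega

lemma forall_le_beta_iff {μ : YoungDiagram} {m : ℕ} :
    (∀ i : Fin p, m ≤ beta p μ i) ↔ ∀ k < p, m ≤ μ.rowLen k := by
  refine ⟨fun h k hk ↦ ?_, fun h i ↦ (h _ i.rev.2).trans (Nat.le_add_right _ _)⟩
  calc m ≤ beta p μ ⟨0, by omega⟩ := h _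
    _ = μ.rowLen (p - 1) := by simp [beta, Fin.val_rev]
    _ ≤ μ.rowLen k := μ.rowLen_anti _ _ (by omega)

lemma tsum_youngDiagram_eq_tsum_ofBeta {F : YoungDiagram → ℝ}
    (hF : ∀ μ : YoungDiagram, μ.rowLen p ≠ 0 → F μ = 0) :
    ∑' μ, F μ = ∑' b : {b : Fin p → ℕ // StrictMono b}, F (ofBeta b.1) := by
  have hinj : Function.Injective fun b : {b : Fin p → ℕ // StrictMono b} ↦ ofBeta b.1 :=
    fun b c hbc ↦ Subtype.ext <| by
      rw [← beta_ofBeta b.2, ← beta_ofBeta c.2]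
      exact congrArg (beta p) hbc
  refine (hinj.tsum_eq fun μ hμ ↦ ?_).symm
  exact ⟨⟨beta p μ, beta_strictMono μ⟩, ofBeta_beta (not_not.1 fun h ↦ hμ (hF μ h))⟩

end BetaNumbers

section SemistandardTableaux

variable {p : ℕ} {μ ν : YoungDiagram}

/-- The semistandard tableaux counted by `numSSYT μ q`. -/
def boundedSSYT (μ : YoungDiagram) (q : ℕ) : Set (SemistandardYoungTableau μ) :=
  {T | ∀ c ∈ μ.cells, T c.1 c.2 < q}

lemma mem_boundedSSYT {q : ℕ} {T : SemistandardYoungTableau μ} :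
    T ∈ boundedSSYT μ q ↔ ∀ i j, (i, j) ∈ μ → T i j < q := by
  simp [boundedSSYT]

lemma finite_boundedSSYT (μ : YoungDiagram) (q : ℕ) : (boundedSSYT μ q).Finite := by
  have hinj : Function.Injective fun (T : boundedSSYT μ q) (c : μ.cells) ↦
      (⟨T.1 c.1.1 c.1.2, T.2 c.1 c.2⟩ : Fin q) := by
    intro T T' h
    refine Subtype.ext (SemistandardYoungTableau.ext fun i j ↦ ?_)
    by_cases hc : (i, j) ∈ μ
    · simpa using congrFun h ⟨(i, j), (YoungDiagram.mem_cells _).2 hc⟩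
    · rw [T.1.zeros hc, T'.1.zeros hc]
  have := Finite.of_injective _ hinj
  exact Set.toFinite _

lemma row_le_entry (T : SemistandardYoungTableau μ) {k j : ℕ} (h : (k, j) ∈ μ) : k ≤ T k j := by
  induction k with
  | zero => exact Nat.zero_le _
  | succ k ih =>
    exact (ih (μ.up_left_mem k.le_succ le_rfl h)).trans_lt (T.col_strict (Nat.lt_add_one k) h)

lemma numSSYT_eq_zero (h : μ.rowLen p ≠ 0) : numSSYT μ p = 0 := by
  have hmem : (p, 0) ∈ μ := YoungDiagram.mem_iff_lt_rowLen.2 (Nat.pos_of_ne_zero h)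
  have hempty : boundedSSYT μ p = ∅ := Set.eq_empty_of_forall_notMem fun T hT ↦
    (mem_boundedSSYT.1 hT p 0 hmem).not_ge (row_le_entry T hmem)
  exact (congrArg Set.ncard hempty).trans (Set.ncard_empty _)

/-- The shape formed by the entries smaller than `p` of a semistandard tableau. -/
def sublevelShape (T : SemistandardYoungTableau μ) (p : ℕ) : YoungDiagram where
  cells := μ.cells.filter fun c ↦ T c.1 c.2 < p
  isLowerSet := by
    rintro ⟨k, j⟩ ⟨k', j'⟩ hle hc
    simp only [Prod.mk_le_mk] at hle
    simp only [Finset.coe_filter, YoungDiagram.mem_cells, Set.mem_ofPred_eq] at hc ⊢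
    refine ⟨μ.up_left_mem hle.1 hle.2 hc.1, ?_⟩
    calc T k' j' ≤ T k' j := T.row_weak_of_le hle.2 (μ.up_left_mem hle.1 le_rfl hc.1)
      _ ≤ T k j := T.col_weak hle.1 hc.1
      _ < p := hc.2

lemma mem_sublevelShape {T : SemistandardYoungTableau μ} {k j : ℕ} :
    (k, j) ∈ sublevelShape T p ↔ (k, j) ∈ μ ∧ T k j < p := by
  rw [← YoungDiagram.mem_cells]
  simp [sublevelShape]

lemma rowLen_sublevelShape_eq_zero (T : SemistandardYoungTableau μ) :
    (sublevelShape T p).rowLen p = 0 := by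
  by_contra h
  have hmem : (p, 0) ∈ sublevelShape T p :=
    YoungDiagram.mem_iff_lt_rowLen.2 (Nat.pos_of_ne_zero h)
  exact (mem_sublevelShape.1 hmem).2.not_ge (row_le_entry T (mem_sublevelShape.1 hmem).1)

/-- The interlacing relation `μ₁ ≥ ν₁ ≥ μ₂ ≥ ν₂ ≥ …`, i.e. `μ / ν` is a horizontal strip. -/
def Interlaces (ν μ : YoungDiagram) : Prop :=
  ∀ k, μ.rowLen (k + 1) ≤ ν.rowLen k ∧ ν.rowLen k ≤ μ.rowLen k

lemma Interlaces.mem_of_mem (h : Interlaces ν μ) {k j : ℕ} (hν : (k, j) ∈ ν) : (k, j) ∈ μ :=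
  YoungDiagram.mem_iff_lt_rowLen.2 ((YoungDiagram.mem_iff_lt_rowLen.1 hν).trans_le (h k).2)

lemma Interlaces.mem_of_succ_mem (h : Interlaces ν μ) {k j : ℕ} (hμ : (k + 1, j) ∈ μ) :
    (k, j) ∈ ν :=
  YoungDiagram.mem_iff_lt_rowLen.2 ((YoungDiagram.mem_iff_lt_rowLen.1 hμ).trans_le (h k).1)

lemma interlaces_sublevelShape {T : SemistandardYoungTableau μ}
    (hT : T ∈ boundedSSYT μ (p + 1)) : Interlaces (sublevelShape T p) μ := by
  intro k
  constructor <;> refine le_of_forall_lt fun j hj ↦ ?_ <;>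
    rw [← YoungDiagram.mem_iff_lt_rowLen] at hj ⊢
  · have hlt := T.col_strict (Nat.lt_add_one k) hj
    have hle := mem_boundedSSYT.1 hT _ _ hj
    exact mem_sublevelShape.2 ⟨μ.up_left_mem k.le_succ le_rfl hj, by omega⟩
  · exact (mem_sublevelShape.1 hj).1

lemma interlaces_iff_beta_mem (hν : ν.rowLen p = 0) (hμ : μ.rowLen (p + 1) = 0) :
    Interlaces ν μ ↔ beta p ν ∈ Fintype.piFinset fun i : Fin p ↦
      Finset.Ico (beta (p + 1) μ i.castSucc) (beta (p + 1) μ i.succ) := by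
  have hrow (i : Fin p) : beta p ν i ∈ Finset.Ico (beta (p + 1) μ i.castSucc)
      (beta (p + 1) μ i.succ) ↔
      μ.rowLen (i.rev + 1) ≤ ν.rowLen i.rev ∧ ν.rowLen i.rev ≤ μ.rowLen i.rev := by
    simp only [beta, Fin.rev_castSucc, Fin.rev_succ, Fin.val_succ, Fin.val_castSucc,
      Finset.mem_Ico]
    omega
  simp only [Fintype.mem_piFinset, hrow]
  refine ⟨fun h i ↦ h i.rev, fun h k ↦ ?_⟩
  rcases lt_or_ge k p with hk | hk
  · obtain ⟨i, rfl⟩ := exists_fin_rev_eq hk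
    exact h i
  · have hνk := ν.rowLen_anti _ _ hk
    have hμk := μ.rowLen_anti _ _ (Nat.succ_le_succ hk)
    simp only [Nat.succ_eq_add_one] at hμk
    omega

/-- The restriction of a semistandard tableau to a smaller shape. -/
def restrictSSYT (T : SemistandardYoungTableau μ) (h : Interlaces ν μ) :
    SemistandardYoungTableau ν where
  entry i j := if (i, j) ∈ ν then T i j else 0
  row_weak' hj hc := by
    rw [if_pos hc, if_pos (ν.up_left_mem le_rfl hj.le hc)]
    exact T.row_weak hj (h.mem_of_mem hc)
  col_strict' hi hc := by
    rw [if_pos hc, if_pos (ν.up_left_mem hi.le le_rfl hc)]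
    exact T.col_strict hi (h.mem_of_mem hc)
  zeros' hc := if_neg hc

/-- The extension of a tableau with entries smaller than `p` by the entry `p` on the horizontal
strip `μ / ν`. -/
def extendSSYT (h : Interlaces ν μ) {T : SemistandardYoungTableau ν} (hT : T ∈ boundedSSYT ν p) :
    SemistandardYoungTableau μ where
  entry i j := if (i, j) ∈ ν then T i j else if (i, j) ∈ μ then p else 0
  row_weak' {i j₁ j₂} hj hc := by
    have hc₁ := μ.up_left_mem le_rfl hj.le hc
    by_cases h₂ : (i, j₂) ∈ ν
    · simpa only [h₂, ν.up_left_mem le_rfl hj.le h₂, if_true] using T.row_weak hj h₂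
    · by_cases h₁ : (i, j₁) ∈ ν
      · simpa only [h₁, h₂, hc, if_true, if_false] using (mem_boundedSSYT.1 hT _ _ h₁).le
      · simp only [h₁, h₂, hc, hc₁, if_true, if_false, le_refl]
  col_strict' {i₁ i₂ j} hi hc := by
    obtain ⟨k, rfl⟩ : ∃ k, i₂ = k + 1 := ⟨i₂ - 1, by omega⟩
    have h₁ : (i₁, j) ∈ ν := ν.up_left_mem (by omega) le_rfl (h.mem_of_succ_mem hc)
    by_cases h₂ : (k + 1, j) ∈ ν
    · simpa only [h₁, h₂, if_true] using T.col_strict hi h₂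
    · simpa only [h₁, h₂, hc, if_true, if_false] using mem_boundedSSYT.1 hT _ _ h₁
  zeros' hc := by rw [if_neg fun hν ↦ hc (h.mem_of_mem hν), if_neg hc]

lemma restrictSSYT_apply (T : SemistandardYoungTableau μ) (h : Interlaces ν μ) (i j : ℕ) :
    restrictSSYT T h i j = if (i, j) ∈ ν then T i j else 0 := rfl

lemma extendSSYT_apply (h : Interlaces ν μ) {T : SemistandardYoungTableau ν}
    (hT : T ∈ boundedSSYT ν p) (i j : ℕ) :
    extendSSYT h hT i j = if (i, j) ∈ ν then T i j else if (i, j) ∈ μ then p else 0 := rfl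

lemma restrictSSYT_extendSSYT (h : Interlaces ν μ) {T : SemistandardYoungTableau ν}
    (hT : T ∈ boundedSSYT ν p) : restrictSSYT (extendSSYT h hT) h = T := by
  refine SemistandardYoungTableau.ext fun i j ↦ ?_
  by_cases hν : (i, j) ∈ ν
  · simp [restrictSSYT_apply, extendSSYT_apply, hν]
  · simp [restrictSSYT_apply, hν, T.zeros hν]

lemma extendSSYT_mem_boundedSSYT (h : Interlaces ν μ) {T : SemistandardYoungTableau ν}
    (hT : T ∈ boundedSSYT ν p) : extendSSYT h hT ∈ boundedSSYT μ (p + 1) := by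
  refine mem_boundedSSYT.2 fun i j hμ ↦ ?_
  rw [extendSSYT_apply, if_pos hμ]
  split_ifs with hν
  · exact (mem_boundedSSYT.1 hT i j hν).trans p.lt_succ_self
  · exact p.lt_succ_self

lemma sublevelShape_extendSSYT (h : Interlaces ν μ) {T : SemistandardYoungTableau ν}
    (hT : T ∈ boundedSSYT ν p) : sublevelShape (extendSSYT h hT) p = ν := by
  refine SetLike.ext fun ⟨i, j⟩ ↦ ?_
  rw [mem_sublevelShape, extendSSYT_apply]
  by_cases hν : (i, j) ∈ ν
  · simp [hν, h.mem_of_mem hν, mem_boundedSSYT.1 hT i j hν]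
  · by_cases hμ : (i, j) ∈ μ <;> simp [hν, hμ]

lemma restrictSSYT_mem_boundedSSYT {T : SemistandardYoungTableau μ}
    (h : Interlaces (sublevelShape T p) μ) :
    restrictSSYT T h ∈ boundedSSYT (sublevelShape T p) p := by
  refine mem_boundedSSYT.2 fun i j hν ↦ ?_
  rw [restrictSSYT_apply, if_pos hν]
  exact (mem_sublevelShape.1 hν).2

lemma eq_of_restrictSSYT_eq (h : Interlaces ν μ) {T T' : SemistandardYoungTableau μ}
    (hT : T ∈ boundedSSYT μ (p + 1)) (hT' : T' ∈ boundedSSYT μ (p + 1))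
    (hν : sublevelShape T p = ν) (hν' : sublevelShape T' p = ν)
    (hr : restrictSSYT T h = restrictSSYT T' h) : T = T' := by
  refine SemistandardYoungTableau.ext fun i j ↦ ?_
  by_cases hμ : (i, j) ∈ μ
  · by_cases hc : (i, j) ∈ ν
    · simpa [restrictSSYT_apply, hc] using congrArg (fun S ↦ S i j) hr
    · have heq {S : SemistandardYoungTableau μ} (hS : S ∈ boundedSSYT μ (p + 1))
          (hSν : sublevelShape S p = ν) : S i j = p := by
        have hlt := mem_boundedSSYT.1 hS i j hμ
        have hge : ¬S i j < p := fun hlt ↦ hc (hSν ▸ mem_sublevelShape.2 ⟨hμ, hlt⟩)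
        omega
      rw [heq hT hν, heq hT' hν']
  · rw [T.zeros hμ, T'.zeros hμ]

lemma ncard_sublevelShape_fiber (h : Interlaces ν μ) :
    {T ∈ boundedSSYT μ (p + 1) | sublevelShape T p = ν}.ncard = numSSYT ν p := by
  refine Set.ncard_congr (fun T _ ↦ restrictSSYT T h) ?_ ?_ ?_
  · rintro T ⟨-, rfl⟩
    exact restrictSSYT_mem_boundedSSYT h
  · exact fun T T' hT hT' ↦ eq_of_restrictSSYT_eq h hT.1 hT'.1 hT.2 hT'.2
  · exact fun T hT ↦ ⟨extendSSYT h hT,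
      ⟨extendSSYT_mem_boundedSSYT h hT, sublevelShape_extendSSYT h hT⟩,
      restrictSSYT_extendSSYT h hT⟩

lemma strictMono_of_mem_piFinset_Ico {a : Fin (p + 1) → ℕ} {b : Fin p → ℕ}
    (hb : b ∈ Fintype.piFinset fun i : Fin p ↦ Finset.Ico (a i.castSucc) (a i.succ)) :
    StrictMono b := by
  simp only [Fintype.mem_piFinset, Finset.mem_Ico] at hb
  cases p with
  | zero => exact Subsingleton.strictMono b
  | succ p =>
    refine Fin.strictMono_iff_lt_succ.2 fun i ↦ ?_
    exact (hb i.castSucc).2.trans_le (Fin.succ_castSucc i ▸ (hb i.succ).1)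

lemma numSSYT_succ (hμ : μ.rowLen (p + 1) = 0) :
    numSSYT μ (p + 1) = ∑ b ∈ Fintype.piFinset fun i : Fin p ↦
      Finset.Ico (beta (p + 1) μ i.castSucc) (beta (p + 1) μ i.succ), numSSYT (ofBeta b) p := by
  classical
  have hfin := finite_boundedSSYT μ (p + 1)
  have hmaps : ∀ T ∈ hfin.toFinset, beta p (sublevelShape T p) ∈ Fintype.piFinset fun i : Fin p ↦
      Finset.Ico (beta (p + 1) μ i.castSucc) (beta (p + 1) μ i.succ) := fun T hT ↦
    (interlaces_iff_beta_mem (rowLen_sublevelShape_eq_zero T) hμ).1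
      (interlaces_sublevelShape (hfin.mem_toFinset.1 hT))
  calc numSSYT μ (p + 1) = hfin.toFinset.card := Set.ncard_eq_toFinset_card _ hfin
    _ = ∑ b ∈ _, (hfin.toFinset.filter fun T ↦ beta p (sublevelShape T p) = b).card :=
      Finset.card_eq_sum_card_fiberwise hmaps
    _ = _ := Finset.sum_congr rfl fun b hb ↦ ?_
  have hbeta := beta_ofBeta (strictMono_of_mem_piFinset_Ico hb)
  have hstrip : Interlaces (ofBeta b) μ :=
    (interlaces_iff_beta_mem (rowLen_ofBeta_eq_zero b) hμ).2 (by rwa [hbeta])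
  rw [← ncard_sublevelShape_fiber hstrip, ← Set.ncard_coe_finset]
  congr 1
  ext T
  simp only [Finset.coe_filter, Set.Finite.mem_toFinset, Set.mem_ofPred_eq]
  refine and_congr_right fun _ ↦ ⟨?_, fun h ↦ by rw [h, hbeta]⟩
  rintro rfl
  exact (ofBeta_beta (rowLen_sublevelShape_eq_zero T)).symm

end SemistandardTableaux

section DeterminantFormula

variable {p : ℕ} {μ : YoungDiagram}

lemma sum_Ico_choose (k : ℕ) {m n : ℕ} (h : m ≤ n) :
    ∑ b ∈ Finset.Ico m n, (b.choose k : ℤ) = n.choose (k + 1) - m.choose (k + 1) := by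
  induction n, h using Nat.le_induction with
  | base => simp
  | succ n h ih =>
    rw [Finset.sum_Ico_succ_top h, ih, Nat.choose_succ_succ]
    push_cast
    ring

lemma det_choose_succ (a : Fin (p + 1) → ℕ) :
    (Matrix.of fun i j : Fin (p + 1) ↦ ((a i).choose j : ℤ)).det =
      (Matrix.of fun i j : Fin p ↦
        ((a i.succ).choose (j + 1) - (a i.castSucc).choose (j + 1) : ℤ)).det := by
  let B : Matrix (Fin (p + 1)) (Fin (p + 1)) ℤ :=
    Matrix.of (Fin.cons (fun j ↦ ((a 0).choose j : ℤ))
      fun (i : Fin p) j ↦ ((a i.succ).choose j : ℤ) - (a i.castSucc).choose j)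
  have hB (i : Fin p) : B i.succ 0 = 0 := by simp [B]
  have hB₀ : B 0 0 = 1 := by simp [B]
  rw [Matrix.det_eq_of_forall_row_eq_smul_add_pred (B := B) (fun _ ↦ 1) (by simp [B])
    (by simp [B]), Matrix.det_succ_column_zero, Fin.sum_univ_succ]
  simp only [hB, hB₀, mul_zero, zero_mul, Finset.sum_const_zero, add_zero, Fin.val_zero, pow_zero,
    one_mul]
  rfl

lemma sum_det_choose_eq_det_choose_succ {a : Fin (p + 1) → ℕ} (ha : Monotone a) :
    ∑ b ∈ Fintype.piFinset fun i : Fin p ↦ Finset.Ico (a i.castSucc) (a i.succ),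
      (Matrix.of fun i j : Fin p ↦ ((b i).choose j : ℤ)).det =
    (Matrix.of fun i j : Fin (p + 1) ↦ ((a i).choose j : ℤ)).det := by
  have hmultilinear :=
    (Matrix.detRowAlternating (n := Fin p) (R := ℤ)).toMultilinearMap.map_sum_finset
      (fun (_ : Fin p) (b : ℕ) (j : Fin p) ↦ (b.choose j : ℤ))
      fun i : Fin p ↦ Finset.Ico (a i.castSucc) (a i.succ)
  refine hmultilinear.symm.trans ?_
  rw [det_choose_succ]
  refine congrArg Matrix.det (Matrix.ext fun i j ↦ ?_)
  rw [Finset.sum_apply, Matrix.of_apply, sum_Ico_choose _ (ha i.castSucc_lt_succ.le)]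

lemma numSSYT_zero_right (hμ : μ.rowLen 0 = 0) : numSSYT μ 0 = 1 := by
  have hnotMem (i j : ℕ) : (i, j) ∉ μ := fun h ↦ by
    have := YoungDiagram.mem_iff_lt_rowLen.1 (μ.up_left_mem i.zero_le le_rfl h)
    omega
  refine Set.ncard_eq_one.2 ⟨default, Set.ext fun T ↦ ?_⟩
  refine ⟨fun _ ↦ SemistandardYoungTableau.ext fun i j ↦ ?_, fun _ c hc ↦ ?_⟩
  · rw [T.zeros (hnotMem i j), SemistandardYoungTableau.zeros _ (hnotMem i j)]
  · exact absurd ((YoungDiagram.mem_cells _).1 hc) (hnotMem c.1 c.2)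

lemma numSSYT_eq_det_choose (hμ : μ.rowLen p = 0) :
    (numSSYT μ p : ℤ) = (Matrix.of fun i j : Fin p ↦ ((beta p μ i).choose j : ℤ)).det := by
  induction p generalizing μ with
  | zero => rw [numSSYT_zero_right hμ, Matrix.det_isEmpty, Nat.cast_one]
  | succ p ih =>
    rw [numSSYT_succ hμ, ← sum_det_choose_eq_det_choose_succ (beta_strictMono μ).monotone,
      Nat.cast_sum]
    refine Finset.sum_congr rfl fun b hb ↦ ?_
    rw [ih (rowLen_ofBeta_eq_zero b), beta_ofBeta (strictMono_of_mem_piFinset_Ico hb)]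

lemma prod_factorial_mul_det_choose (b : Fin p → ℕ) :
    (∏ i : Fin p, ((i : ℕ).factorial : ℤ)) *
      (Matrix.of fun i j : Fin p ↦ ((b i).choose j : ℤ)).det =
    (Matrix.vandermonde fun i ↦ (b i : ℤ)).det := by
  rw [Matrix.det_eval_matrixOfPolynomials_eq_det_vandermonde (fun i ↦ (b i : ℤ))
      (fun i ↦ descPochhammer ℤ i) (fun i ↦ descPochhammer_natDegree ℤ i)
      (fun i ↦ monic_descPochhammer ℤ i), ← Matrix.det_mul_row]
  refine congrArg Matrix.det (Matrix.ext fun i j ↦ ?_)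
  simp only [Matrix.of_apply]
  rw [descPochhammer_eval_eq_descFactorial, Nat.descFactorial_eq_factorial_mul_choose]
  push_cast
  rfl

lemma prod_factorial_mul_numSSYT (hμ : μ.rowLen p = 0) :
    (∏ i : Fin p, ((i : ℕ).factorial : ℝ)) * numSSYT μ p =
      (Matrix.vandermonde fun i ↦ (beta p μ i : ℝ)).det := by
  have h := prod_factorial_mul_det_choose (beta p μ)
  rw [← numSSYT_eq_det_choose hμ, Matrix.det_vandermonde] at h
  rw [Matrix.det_vandermonde]
  exact_mod_cast congrArg (Int.cast : ℤ → ℝ) h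

end DeterminantFormula

section HookLengths

open Finset

variable {p : ℕ} {μ : YoungDiagram}

lemma lt_of_mem_of_rowLen_eq_zero (hμ : μ.rowLen p = 0) {k j : ℕ} (h : (k, j) ∈ μ) : k < p := by
  by_contra! hk
  have := YoungDiagram.mem_iff_lt_rowLen.1 h
  have := μ.rowLen_anti _ _ hk
  omega

@[to_additive]
lemma prod_cells_eq_prod_rev_rows {M : Type*} [CommMonoid M] (hμ : μ.rowLen p = 0)
    (f : ℕ × ℕ → M) :
    ∏ c ∈ μ.cells, f c = ∏ i : Fin p, ∏ j ∈ range (μ.rowLen i.rev), f (i.rev, j) := by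
  have hmaps : ∀ c ∈ μ.cells, c.1 ∈ range p := fun c hc ↦
    mem_range.2 (lt_of_mem_of_rowLen_eq_zero hμ ((YoungDiagram.mem_cells _).1 hc))
  have hrow (k : ℕ) : ∏ c ∈ μ.cells with c.1 = k, f c = ∏ j ∈ range (μ.rowLen k), f (k, j) := by
    change ∏ c ∈ μ.row k, f c = _
    rw [YoungDiagram.row_eq_prod, prod_product, prod_singleton]
  rw [← prod_fiberwise_of_maps_to hmaps]
  simp only [hrow]
  rw [← Fin.prod_univ_eq_prod_range (fun k ↦ ∏ j ∈ range (μ.rowLen k), f (k, j))]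
  exact (Equiv.prod_comp Fin.revPerm
    fun i : Fin p ↦ ∏ j ∈ range (μ.rowLen i), f ((i : ℕ), j)).symm

lemma card_add_sum_val_eq_sum_beta (hμ : μ.rowLen p = 0) :
    μ.card + ∑ i : Fin p, (i : ℕ) = ∑ i, beta p μ i := by
  rw [YoungDiagram.card, card_eq_sum_ones, sum_cells_eq_sum_rev_rows hμ]
  simp only [sum_const, card_range, smul_eq_mul, mul_one, beta, sum_add_distrib]

lemma colLen_le_of_rowLen_eq_zero (hμ : μ.rowLen p = 0) (j : ℕ) : μ.colLen j ≤ p := by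
  by_contra! h
  exact (lt_of_mem_of_rowLen_eq_zero hμ (YoungDiagram.mem_iff_lt_colLen.2 h)).false

lemma hookLen_rev_add {i : Fin p} {j : ℕ} (h : j < μ.rowLen i.rev) :
    hookLen μ (i.rev, j) + p + j = beta p μ i + μ.colLen j := by
  have hcol := YoungDiagram.mem_iff_lt_colLen.1 (YoungDiagram.mem_iff_lt_rowLen.2 h)
  have hrev := i.val_rev
  simp only [hookLen, beta]
  omega

lemma hookLen_injOn_row (μ : YoungDiagram) (k : ℕ) :
    Set.InjOn (fun j ↦ hookLen μ (k, j)) (range (μ.rowLen k)) := by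
  refine StrictAntiOn.injOn fun j hj j' hj' hlt ↦ ?_
  rw [coe_range, Set.mem_Iio, ← YoungDiagram.mem_iff_lt_rowLen] at hj hj'
  have hcol := YoungDiagram.mem_iff_lt_colLen.1 hj
  have hcol' := YoungDiagram.mem_iff_lt_colLen.1 hj'
  have hanti := μ.colLen_anti _ _ hlt.le
  rw [YoungDiagram.mem_iff_lt_rowLen] at hj hj'
  simp only [hookLen]
  omega

lemma hookLen_ne_beta_sub_beta {i i' : Fin p} (hi : i' < i) {j : ℕ} (hj : j < μ.rowLen i.rev) :
    hookLen μ (i.rev, j) ≠ beta p μ i - beta p μ i' := by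
  intro h
  have hhook := hookLen_rev_add hj
  have hlt := beta_strictMono μ hi
  have hcell : j < μ.rowLen i'.rev ↔ i'.rev < μ.colLen j := by
    rw [← YoungDiagram.mem_iff_lt_rowLen, YoungDiagram.mem_iff_lt_colLen]
  have hrev := i'.val_rev
  simp only [beta] at *
  omega

lemma beta_sub_injOn (μ : YoungDiagram) (i : Fin p) :
    Set.InjOn (fun i' ↦ beta p μ i - beta p μ i') (Iio i) := by
  intro i₁ h₁ i₂ h₂ h
  have hlt₁ := beta_strictMono μ (mem_Iio.1 h₁)
  have hlt₂ := beta_strictMono μ (mem_Iio.1 h₂)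
  refine (beta_strictMono μ).injective ?_
  simp only at h
  omega

lemma disjoint_image_hookLen_image_beta_sub (μ : YoungDiagram) (i : Fin p) :
    Disjoint ((range (μ.rowLen i.rev)).image fun j ↦ hookLen μ (i.rev, j))
      ((Iio i).image fun i' ↦ beta p μ i - beta p μ i') := by
  simp only [disjoint_left, mem_image, mem_range, mem_Iio]
  rintro _ ⟨j, hj, rfl⟩ ⟨i', hi', h⟩
  exact hookLen_ne_beta_sub_beta hi' hj h.symm

lemma image_hookLen_union_image_beta_sub (hμ : μ.rowLen p = 0) (i : Fin p) :
    (range (μ.rowLen i.rev)).image (fun j ↦ hookLen μ (i.rev, j)) ∪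
      (Iio i).image (fun i' ↦ beta p μ i - beta p μ i') = Ico 1 (beta p μ i + 1) := by
  refine eq_of_subset_of_card_le (union_subset ?_ ?_) ?_
  · intro h hh
    obtain ⟨j, hj, rfl⟩ := mem_image.1 hh
    have hhook := hookLen_rev_add (mem_range.1 hj)
    have hcol := YoungDiagram.mem_iff_lt_colLen.1
      (YoungDiagram.mem_iff_lt_rowLen.2 (mem_range.1 hj))
    have hle := colLen_le_of_rowLen_eq_zero hμ j
    have hj' := mem_range.1 hj
    have hrev := i.val_rev
    simp only [mem_Ico, beta] at *
    omega
  · intro h hh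
    obtain ⟨i', hi', rfl⟩ := mem_image.1 hh
    have := beta_strictMono μ (mem_Iio.1 hi')
    rw [mem_Ico]
    omega
  · rw [card_union_of_disjoint (disjoint_image_hookLen_image_beta_sub μ i),
      card_image_of_injOn (hookLen_injOn_row μ _), card_image_of_injOn (beta_sub_injOn μ i),
      card_range, Fin.card_Iio, Nat.card_Ico, beta]
    omega

lemma prod_hookLen_row_mul_prod_beta_sub (hμ : μ.rowLen p = 0) (i : Fin p) :
    (∏ j ∈ range (μ.rowLen i.rev), hookLen μ (i.rev, j)) *
      ∏ i' ∈ Iio i, (beta p μ i - beta p μ i') = (beta p μ i).factorial := by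
  rw [← prod_Ico_id_eq_factorial, ← image_hookLen_union_image_beta_sub hμ,
    prod_union (disjoint_image_hookLen_image_beta_sub μ i),
    prod_image (hookLen_injOn_row μ _), prod_image (beta_sub_injOn μ i)]

lemma hookProd_mul_det_vandermonde (hμ : μ.rowLen p = 0) :
    (hookProd μ : ℝ) * (Matrix.vandermonde fun i ↦ (beta p μ i : ℝ)).det =
      ∏ i, ((beta p μ i).factorial : ℝ) := by
  have hdet : (Matrix.vandermonde fun i ↦ (beta p μ i : ℝ)).det =
      ((∏ i, ∏ i' ∈ Iio i, (beta p μ i - beta p μ i') : ℕ) : ℝ) := by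
    rw [Matrix.det_vandermonde, prod_comm' (t' := univ) (s' := fun i ↦ Iio i) (by simp)]
    push_cast
    refine prod_congr rfl fun i _ ↦ prod_congr rfl fun j hj ↦ ?_
    rw [Nat.cast_sub (beta_strictMono μ (mem_Iio.1 hj)).le]
  rw [hdet, hookProd, prod_cells_eq_prod_rev_rows hμ]
  norm_cast
  rw [← prod_mul_distrib]
  exact prod_congr rfl fun i _ ↦ prod_hookLen_row_mul_prod_beta_sub hμ i

end HookLengths

section PoissonizedWeight

variable {p : ℕ}

lemma vdm_sq (x : Fin p → ℝ) : vdm x ^ 2 = (Matrix.vandermonde x).det ^ 2 := by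
  rw [Matrix.det_vandermonde, vdm]
  simp only [← Finset.prod_pow]
  exact Finset.prod_congr rfl fun i _ ↦ Finset.prod_congr rfl fun j _ ↦ sub_sq_comm _ _

lemma vdm_sq_comp_perm (x : Fin p → ℝ) (σ : Equiv.Perm (Fin p)) :
    vdm (x ∘ σ) ^ 2 = vdm x ^ 2 := by
  have hsub : Matrix.vandermonde (x ∘ σ) = (Matrix.vandermonde x).submatrix σ id := rfl
  rw [vdm_sq, vdm_sq, hsub, Matrix.det_permute, mul_pow]
  rcases Int.units_eq_one_or (Equiv.Perm.sign σ) with h | h <;> simp [h]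

lemma vdm_eq_zero_of_not_injective {x : Fin p → ℝ} (hx : ¬Function.Injective x) : vdm x = 0 := by
  rw [← sq_eq_zero_iff, vdm_sq, sq_eq_zero_iff]
  exact not_not.1 (mt Matrix.det_vandermonde_ne_zero_iff.1 hx)

lemma poissonized_weight_eq {μ : YoungDiagram} (hμ : μ.rowLen p = 0) (hp : p ≠ 0) {r : NNReal}
    (hr : r ≠ 0) :
    Real.exp (-(p * r)) * (p * r) ^ μ.card / (Nat.factorial μ.card : ℝ) * Pword μ.card p μ =
      (∏ i : Fin p, ((i : ℕ).factorial * (r : ℝ) ^ (i : ℕ)))⁻¹ *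
        (vdm (fun i ↦ (beta p μ i : ℝ)) ^ 2 *
          ∏ i, (ProbabilityTheory.poissonMeasure r).real {beta p μ i}) := by
  have hcard := card_add_sum_val_eq_sum_beta hμ
  have hssyt := prod_factorial_mul_numSSYT hμ
  have hhook := hookProd_mul_det_vandermonde hμ
  have hfact (b : Fin p → ℕ) : ∏ i, ((b i).factorial : ℝ) ≠ 0 :=
    Finset.prod_ne_zero_iff.2 fun i _ ↦ by positivity
  have hhook₀ : (hookProd μ : ℝ) ≠ 0 := left_ne_zero_of_mul (hhook.trans_ne (hfact _))
  have hssyt₀ : (numSSYT μ p : ℝ) ≠ 0 :=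
    right_ne_zero_of_mul (hssyt.trans_ne (right_ne_zero_of_mul (hhook.trans_ne (hfact _))))
  have hval := hfact fun i : Fin p ↦ i
  simp only [ProbabilityTheory.poissonMeasure_real_singleton]
  rw [vdm_sq, Finset.prod_div_distrib, Finset.prod_mul_distrib, Finset.prod_mul_distrib,
    Finset.prod_pow_eq_pow_sum, Finset.prod_pow_eq_pow_sum, ← hcard, ← hhook, Finset.prod_const,
    Finset.card_univ, Fintype.card_fin, ← Real.exp_nat_mul, pow_add, ← hssyt, Pword, fSYT, mul_pow,
    mul_neg]
  field_simp

end PoissonizedWeight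

section Symmetrization

variable {p : ℕ} {α : Type*} [LinearOrder α]

lemma eq_sum_perm_indicator_strictMono {K : (Fin p → α) → ℝ}
    (hsymm : ∀ h (σ : Equiv.Perm (Fin p)), K (h ∘ σ) = K h)
    (hinj : ∀ h, ¬Function.Injective h → K h = 0) (h : Fin p → α) :
    K h = ∑ σ : Equiv.Perm (Fin p), {b | StrictMono b}.indicator K (h ∘ σ) := by
  by_cases hi : Function.Injective h
  · have hsort : StrictMono (h ∘ Tuple.sort h) :=
      (Tuple.monotone_sort h).strictMono_of_injective (hi.comp (Equiv.injective _))
    have hunique (σ : Equiv.Perm (Fin p)) (hσ : StrictMono (h ∘ σ)) : σ = Tuple.sort h :=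
      Equiv.ext fun i ↦ hi <| congrFun ((StrictMono.range_inj hσ hsort).1 (by
        rw [Set.range_comp, Set.range_comp, Equiv.range_eq_univ, Equiv.range_eq_univ])) i
    rw [Finset.sum_eq_single (Tuple.sort h)
      (fun σ _ hσ ↦ Set.indicator_of_notMem (mt (hunique σ) hσ) K) (by simp),
      Set.indicator_of_mem (by exact hsort), hsymm]
  · refine ((Finset.sum_eq_zero fun σ _ ↦ ?_).trans (hinj h hi).symm).symm
    exact Set.indicator_apply_eq_zero.2 fun _ ↦ (hsymm h σ).trans (hinj h hi)

lemma tsum_strictMono_eq_inv_factorial_mul_tsum {K : (Fin p → α) → ℝ}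
    (hsymm : ∀ h (σ : Equiv.Perm (Fin p)), K (h ∘ σ) = K h)
    (hinj : ∀ h, ¬Function.Injective h → K h = 0) :
    ∑' b : {b : Fin p → α // StrictMono b}, K b = (p.factorial : ℝ)⁻¹ * ∑' h, K h := by
  set K' := {b : Fin p → α | StrictMono b}.indicator K with hK'
  have hsum : K = fun h ↦ ∑ σ : Equiv.Perm (Fin p), K' (h ∘ σ) :=
    funext (eq_sum_perm_indicator_strictMono hsymm hinj)
  have hperm (σ : Equiv.Perm (Fin p)) : (fun h ↦ K' (h ∘ σ)) =
      K' ∘ Equiv.arrowCongr σ.symm (Equiv.refl α) := rfl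
  refine (tsum_subtype {b : Fin p → α | StrictMono b} K).trans ?_
  rw [← hK']
  by_cases hs : Summable K'
  · have hs' (σ : Equiv.Perm (Fin p)) : Summable fun h ↦ K' (h ∘ σ) :=
      hperm σ ▸ (Equiv.summable_iff _).2 hs
    rw [hsum, Summable.tsum_finsetSum fun σ _ ↦ hs' σ,
      Finset.sum_congr rfl fun σ _ ↦ (Equiv.arrowCongr σ.symm (Equiv.refl α)).tsum_eq K',
      Finset.sum_const, Finset.card_univ, Fintype.card_perm, Fintype.card_fin, nsmul_eq_mul,
      inv_mul_cancel_left₀ (by positivity)]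
  · rw [tsum_eq_zero_of_not_summable hs,
      tsum_eq_zero_of_not_summable fun h ↦ hs (h.indicator _), mul_zero]

end Symmetrization

section PoissonEnsemble

variable {p : ℕ}

lemma integral_eq_tsum_of_countable {α : Type*} [MeasurableSpace α] [Countable α]
    [MeasurableSingletonClass α] (ν : Measure α) [IsFiniteMeasure ν] (f : α → ℝ) :
    ∫ a, f a ∂ν = ∑' a, ν.real {a} * f a := by
  conv_lhs => rw [← Measure.sum_smul_dirac ν]
  exact integral_sum_dirac fun a ↦ measure_ne_top ν {a}

lemma measureReal_pi_singleton {ι α : Type*} [Fintype ι] [MeasurableSpace α] {ν : Measure α}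
    [SigmaFinite ν] (h : ι → α) : (Measure.pi fun _ ↦ ν).real {h} = ∏ i, ν.real {h i} := by
  simp only [Measure.real, Measure.pi_singleton, ENNReal.toReal_prod]

lemma Epois_eq_integral_vdm_sq (hp : p ≠ 0) {r : NNReal} (hr : r ≠ 0) {g : YoungDiagram → ℝ}
    {G : (Fin p → ℕ) → ℝ} (hG : ∀ h (σ : Equiv.Perm (Fin p)), G (h ∘ σ) = G h)
    (hg : ∀ μ : YoungDiagram, μ.rowLen p = 0 → g μ = G (beta p μ)) :
    Epois r p g = (p.factorial * ∏ i : Fin p, ((i : ℕ).factorial * (r : ℝ) ^ (i : ℕ)))⁻¹ *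
      ∫ h : Fin p → ℕ, vdm (fun i ↦ (h i : ℝ)) ^ 2 * G h
        ∂Measure.pi fun _ ↦ ProbabilityTheory.poissonMeasure r := by
  set ν := ProbabilityTheory.poissonMeasure r
  let K (h : Fin p → ℕ) : ℝ := (Measure.pi fun _ ↦ ν).real {h} *
    (vdm (fun i ↦ (h i : ℝ)) ^ 2 * G h)
  have hpi (h : Fin p → ℕ) : (Measure.pi fun _ ↦ ν).real {h} = ∏ i, ν.real {h i} :=
    measureReal_pi_singleton h
  have hsymm (h : Fin p → ℕ) (σ : Equiv.Perm (Fin p)) : K (h ∘ σ) = K h := by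
    have hvdm := vdm_sq_comp_perm (fun i ↦ (h i : ℝ)) σ
    simp only [K, hpi, hG, Function.comp_apply, Equiv.prod_comp σ fun i ↦ ν.real {h i}]
    rw [← hvdm]
    rfl
  have hinj (h : Fin p → ℕ) (hh : ¬Function.Injective h) : K h = 0 := by
    have hcast : ¬Function.Injective fun i ↦ (h i : ℝ) :=
      fun hi ↦ hh (hi.of_comp (f := Nat.cast (R := ℝ)))
    simp only [K, vdm_eq_zero_of_not_injective hcast]
    ring
  calc Epois r p g
    _ = ∑' b : {b : Fin p → ℕ // StrictMono b},
        (∏ i : Fin p, ((i : ℕ).factorial * (r : ℝ) ^ (i : ℕ)))⁻¹ * K b := by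
      rw [Epois, tsum_youngDiagram_eq_tsum_ofBeta (p := p) fun μ hμ ↦ by
        rw [Pword, numSSYT_eq_zero hμ]; simp]
      refine tsum_congr fun b ↦ ?_
      rw [poissonized_weight_eq (rowLen_ofBeta_eq_zero _) hp hr, hg _ (rowLen_ofBeta_eq_zero _),
        beta_ofBeta b.2, ← hpi]
      ring
    _ = _ := by
      rw [tsum_mul_left, tsum_strictMono_eq_inv_factorial_mul_tsum hsymm hinj,
        integral_eq_tsum_of_countable, mul_inv]
      ring

end PoissonEnsemble

section StripWeight

variable {p : ℕ}

/-- The factor contributed by a beta-number `h` to the strip hook product over the `m` columns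
ending at column `c`, including the indicator that the corresponding row reaches column `c`. -/
def stripWeight (c m h : ℕ) : ℝ :=
  if c ≤ h then ∏ k ∈ Finset.range m, ((h : ℝ) - c + (k + 1)) else 0

lemma colLen_eq_of_forall_le_rowLen {μ : YoungDiagram} (hμ : μ.rowLen p = 0) {c j : ℕ}
    (h : ∀ k < p, c ≤ μ.rowLen k) (hj : j < c) : μ.colLen j = p := by
  refine eq_of_forall_lt_iff fun k ↦ ?_
  rw [← YoungDiagram.mem_iff_lt_colLen]
  exact ⟨lt_of_mem_of_rowLen_eq_zero hμ,
    fun hk ↦ YoungDiagram.mem_iff_lt_rowLen.2 (hj.trans_le (h k hk))⟩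

lemma Hstrip_eq_prod {μ : YoungDiagram} (hμ : μ.rowLen p = 0) {n q : ℕ} (hpq : p ≤ q)
    (hqn : q ≤ n) (h : ∀ k < p, n - p ≤ μ.rowLen k) :
    (Hstrip n p q μ : ℝ) =
      ∏ i, ∏ k ∈ Finset.range (q - p), ((beta p μ i : ℝ) - (n - p : ℕ) + (k + 1)) := by
  rw [Hstrip, Finset.prod_filter, prod_cells_eq_prod_rev_rows hμ, Nat.cast_prod]
  refine Finset.prod_congr rfl fun i _ ↦ ?_
  have hrow := h _ i.rev.2
  have hfilter : {j ∈ Finset.range (μ.rowLen i.rev) | n - q ≤ j ∧ j < n - p} =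
      Finset.Ico (n - q) (n - p) := by
    ext j
    simp only [Finset.mem_filter, Finset.mem_range, Finset.mem_Ico]
    omega
  rw [← Finset.prod_filter, hfilter, Finset.prod_Ico_eq_prod_range,
    show n - p - (n - q) = q - p by omega, ← Finset.prod_range_reflect, Nat.cast_prod]
  refine Finset.prod_congr rfl fun k hk ↦ ?_
  rw [Finset.mem_range] at hk
  have hlt : n - q + (q - p - 1 - k) < n - p := by omega
  have hhook := hookLen_rev_add (hlt.trans_le hrow)
  rw [colLen_eq_of_forall_le_rowLen hμ h hlt] at hhook
  have hle : n - p ≤ beta p μ i := hrow.trans (Nat.le_add_right _ _)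
  rw [← Nat.cast_sub hle]
  norm_cast
  omega

lemma indSup_mul_Hstrip {μ : YoungDiagram} (hμ : μ.rowLen p = 0) {n q : ℕ} (hpq : p ≤ q)
    (hqn : q ≤ n) :
    indSup n p μ * Hstrip n p q μ = ∏ i, stripWeight (n - p) (q - p) (beta p μ i) := by
  by_cases h : ∀ i, n - p ≤ beta p μ i
  · have hrow := forall_le_beta_iff.1 h
    simp only [stripWeight, h, if_true]
    rw [indSup, if_pos hrow, one_mul, Hstrip_eq_prod hμ hpq hqn hrow]
  · obtain ⟨i, hi⟩ := not_forall.1 h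
    rw [indSup, if_neg (mt forall_le_beta_iff.2 h), zero_mul]
    exact (Finset.prod_eq_zero (Finset.mem_univ i) (if_neg hi)).symm

end StripWeight

section Andreief

open Polynomial

variable {ι α : Type*} [Fintype ι] [DecidableEq ι] [MeasurableSpace α]

lemma sum_perm_sign_mul_prod_submatrix (M : Matrix ι ι ℝ) :
    ∑ σ : Equiv.Perm ι, ∑ τ : Equiv.Perm ι,
      ((σ.sign : ℤ) : ℝ) * ((τ.sign : ℤ) : ℝ) * ∏ i, M (σ i) (τ i) =
    (Fintype.card ι).factorial * M.det := by
  have hrow (σ : Equiv.Perm ι) : ∑ τ : Equiv.Perm ι,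
      ((σ.sign : ℤ) : ℝ) * ((τ.sign : ℤ) : ℝ) * ∏ i, M (σ i) (τ i) = M.det := by
    have hdet := Matrix.det_permute σ M
    rw [← Matrix.det_transpose, Matrix.det_apply'] at hdet
    simp only [mul_assoc, ← Finset.mul_sum]
    refine (congrArg (((σ.sign : ℤ) : ℝ) * ·) hdet).trans ?_
    rcases Int.units_eq_one_or σ.sign with h | h <;> simp [h]
  rw [Finset.sum_congr rfl fun σ _ ↦ hrow σ, Finset.sum_const, Finset.card_univ,
    Fintype.card_perm, nsmul_eq_mul]

lemma integral_det_mul_det (ν : Measure α) [SigmaFinite ν] {φ ψ : ι → α → ℝ}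
    (hinteg : ∀ i j, Integrable (fun a ↦ φ i a * ψ j a) ν) :
    ∫ ξ : ι → α, (Matrix.of fun i j ↦ φ j (ξ i)).det * (Matrix.of fun i j ↦ ψ j (ξ i)).det
      ∂Measure.pi (fun _ ↦ ν) =
    (Fintype.card ι).factorial * (Matrix.of fun i j ↦ ∫ a, φ i a * ψ j a ∂ν).det := by
  have hexpand (ξ : ι → α) :
      (Matrix.of fun i j ↦ φ j (ξ i)).det * (Matrix.of fun i j ↦ ψ j (ξ i)).det =
        ∑ σ : Equiv.Perm ι, ∑ τ : Equiv.Perm ι,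
          ((σ.sign : ℤ) : ℝ) * ((τ.sign : ℤ) : ℝ) * ∏ i, (φ (σ i) (ξ i) * ψ (τ i) (ξ i)) := by
    rw [← Matrix.det_transpose, ← Matrix.det_transpose (Matrix.of fun i j ↦ ψ j (ξ i)),
      Matrix.det_apply', Matrix.det_apply', Finset.sum_mul_sum]
    refine Finset.sum_congr rfl fun σ _ ↦ Finset.sum_congr rfl fun τ _ ↦ ?_
    simp only [Matrix.transpose_apply, Matrix.of_apply, Finset.prod_mul_distrib]
    ring
  have hterm (σ τ : Equiv.Perm ι) : Integrable (fun ξ : ι → α ↦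
      ((σ.sign : ℤ) : ℝ) * ((τ.sign : ℤ) : ℝ) * ∏ i, (φ (σ i) (ξ i) * ψ (τ i) (ξ i)))
      (Measure.pi fun _ ↦ ν) :=
    (Integrable.fintype_prod (f := fun i a ↦ φ (σ i) a * ψ (τ i) a)
      fun i ↦ hinteg _ _).const_mul _
  simp only [hexpand]
  rw [integral_finsetSum _ fun σ _ ↦ integrable_finsetSum _ fun τ _ ↦ hterm σ τ,
    ← sum_perm_sign_mul_prod_submatrix]
  refine Finset.sum_congr rfl fun σ _ ↦ ?_
  rw [integral_finsetSum _ fun τ _ ↦ hterm σ τ]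
  refine Finset.sum_congr rfl fun τ _ ↦ ?_
  rw [integral_const_mul]
  exact congrArg _ (integral_fintype_prod_eq_prod fun i a ↦ φ (σ i) a * ψ (τ i) a)

variable {p : ℕ}

lemma integral_vdm_sq_mul_prod (ν : Measure α) [SigmaFinite ν] {f w : α → ℝ} {P : ℕ → ℝ[X]}
    (hmonic : ∀ k, (P k).Monic) (hdeg : ∀ k, (P k).natDegree = k)
    (hinteg : ∀ j k, Integrable (fun a ↦ (P j * P k).eval (f a) * w a) ν) :
    ∫ ξ : Fin p → α, vdm (fun i ↦ f (ξ i)) ^ 2 * ∏ i, w (ξ i) ∂Measure.pi (fun _ ↦ ν) =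
      p.factorial * (Matrix.of fun i j : Fin p ↦ ∫ a, (P i * P j).eval (f a) * w a ∂ν).det := by
  have hentry (i j : Fin p) (a : α) : (P i * P j).eval (f a) * w a =
      (P i).eval (f a) * (w a * (P j).eval (f a)) := by
    rw [eval_mul]
    ring
  simp only [hentry] at hinteg ⊢
  have h := integral_det_mul_det ν (φ := fun (i : Fin p) a ↦ (P i).eval (f a))
    (ψ := fun (j : Fin p) a ↦ w a * (P j).eval (f a)) fun i j ↦ by
      simpa only [hentry] using hinteg i j
  rw [Fintype.card_fin] at h
  rw [← h]
  refine integral_congr_ae (.of_forall fun ξ ↦ ?_)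
  have hw : (Matrix.of fun i j : Fin p ↦ w (ξ i) * (P j).eval (f (ξ i))).det =
      (∏ i, w (ξ i)) * (Matrix.of fun i j : Fin p ↦ (P j).eval (f (ξ i))).det :=
    Matrix.det_mul_column _ _
  simp only [hw]
  rw [vdm_sq, Matrix.det_eval_matrixOfPolynomials_eq_det_vandermonde _ (fun i ↦ P i)
    (fun i ↦ hdeg i) (fun i ↦ hmonic i)]
  ring

/-- The Hankel matrix of a sequence of moments. -/
def hankel (p : ℕ) (a : ℕ → ℝ) : Matrix (Fin p) (Fin p) ℝ := Matrix.of fun i j ↦ a (i + j)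

lemma continuous_det_hankel (p : ℕ) : Continuous fun a : ℕ → ℝ ↦ (hankel p a).det :=
  Continuous.matrix_det (continuous_matrix fun i j ↦ continuous_apply ((i : ℕ) + j))

lemma det_hankel_mul_pow (p : ℕ) (c r : ℝ) (a : ℕ → ℝ) :
    (hankel p fun k ↦ c * r ^ k * a k).det =
      c ^ p * (∏ i : Fin p, (r ^ 2) ^ (i : ℕ)) * (hankel p a).det := by
  have hfactor : hankel p (fun k ↦ c * r ^ k * a k) = c • Matrix.of fun i j : Fin p ↦
      r ^ (i : ℕ) * (Matrix.of fun i j : Fin p ↦ r ^ (j : ℕ) * hankel p a i j) i j := by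
    ext i j
    simp only [hankel, Matrix.of_apply, Matrix.smul_apply, smul_eq_mul, pow_add]
    ring
  rw [hfactor, Matrix.det_smul, Matrix.det_mul_column, Matrix.det_mul_row, Fintype.card_fin]
  have hsq : ∏ i : Fin p, (r ^ 2) ^ (i : ℕ) =
      (∏ i : Fin p, r ^ (i : ℕ)) * ∏ i : Fin p, r ^ (i : ℕ) := by
    rw [← Finset.prod_mul_distrib]
    exact Finset.prod_congr rfl fun i _ ↦ by ring
  rw [hsq]
  ring

lemma integral_vdm_sq_mul_prod_eq_det_hankel (ν : Measure α) [SigmaFinite ν] {f w : α → ℝ}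
    (c : ℝ) (hinteg : ∀ k, Integrable (fun a ↦ (f a - c) ^ k * w a) ν) :
    ∫ ξ : Fin p → α, vdm (fun i ↦ f (ξ i)) ^ 2 * ∏ i, w (ξ i) ∂Measure.pi (fun _ ↦ ν) =
      p.factorial * (hankel p fun k ↦ ∫ a, (f a - c) ^ k * w a ∂ν).det := by
  have heval (j k : ℕ) (a : α) :
      ((X - C c) ^ j * (X - C c) ^ k).eval (f a) = (f a - c) ^ (j + k) := by
    simp [pow_add]
  rw [integral_vdm_sq_mul_prod ν (P := fun k ↦ (X - C c) ^ k) (fun k ↦ (monic_X_sub_C c).pow k)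
    (fun k ↦ by rw [(monic_X_sub_C c).natDegree_pow, natDegree_X_sub_C, mul_one])
    fun j k ↦ by simpa only [heval] using hinteg (j + k)]
  simp only [heval, hankel]

end Andreief

section HermitePolynomials

open Polynomial

/-- The monic Hermite polynomials for the weight `exp (-x ^ 2)`. -/
def monicHermite : ℕ → ℝ[X]
  | 0 => 1
  | k + 1 => X * monicHermite k - C (1 / 2) * derivative (monicHermite k)

lemma monicHermite_monic_and_natDegree (k : ℕ) :
    (monicHermite k).Monic ∧ (monicHermite k).natDegree = k := by
  induction k with
  | zero => simp [monicHermite]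
  | succ k ih =>
    have hmonic : (X * monicHermite k).Monic := monic_X.mul ih.1
    have hdeg : (X * monicHermite k).natDegree = k + 1 := by
      rw [monic_X.natDegree_mul ih.1, natDegree_X, ih.2, add_comm]
    have hlt : (C (1 / 2) * derivative (monicHermite k)).natDegree <
        (X * monicHermite k).natDegree := by
      have := (natDegree_C_mul_le (1 / 2) (derivative (monicHermite k))).trans
        (natDegree_derivative_le _)
      omega
    exact ⟨hmonic.sub_of_left (degree_lt_degree hlt),
      (natDegree_sub_eq_left_of_natDegree_lt hlt).trans hdeg⟩

lemma integrable_eval_mul_exp_neg_sq (P : ℝ[X]) :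
    Integrable fun x : ℝ ↦ P.eval x * Real.exp (-(x ^ 2)) := by
  simp only [eval_eq_sum_range, Finset.sum_mul]
  refine integrable_finsetSum _ fun k _ ↦ ?_
  have hpow := integrable_rpow_mul_exp_neg_mul_sq one_pos (s := k)
    ((neg_one_lt_zero).trans_le k.cast_nonneg)
  refine (hpow.const_mul (P.coeff k)).congr (.of_forall fun x ↦ ?_)
  simp only [rpow_natCast, neg_mul, one_mul, mul_assoc]

lemma integral_X_mul_mul_exp_neg_sq (P : ℝ[X]) :
    ∫ x : ℝ, (X * P).eval x * Real.exp (-(x ^ 2)) =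
      1 / 2 * ∫ x : ℝ, (derivative P).eval x * Real.exp (-(x ^ 2)) := by
  have hderiv (x : ℝ) : HasDerivAt (fun x ↦ P.eval x * Real.exp (-(x ^ 2)))
      ((derivative P).eval x * Real.exp (-(x ^ 2)) -
        2 * ((X * P).eval x * Real.exp (-(x ^ 2)))) x := by
    have hmul := (P.hasDerivAt x).mul (((hasDerivAt_id x).pow 2).neg.exp)
    convert! hmul using 1
    simp only [eval_mul, eval_X, Pi.neg_apply, Pi.pow_apply, id_eq, Nat.cast_ofNat,
      Nat.add_one_sub_one, pow_one, mul_one, mul_neg]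
    ring
  have hinteg₁ := integrable_eval_mul_exp_neg_sq (derivative P)
  have hinteg₂ := (integrable_eval_mul_exp_neg_sq (X * P)).const_mul 2
  have hzero := integral_eq_zero_of_hasDerivAt_of_integrable hderiv (hinteg₁.sub hinteg₂)
    (integrable_eval_mul_exp_neg_sq P)
  rw [integral_sub hinteg₁ hinteg₂, integral_const_mul] at hzero
  linarith

lemma integral_monicHermite_mul (k : ℕ) (P : ℝ[X]) :
    ∫ x : ℝ, (monicHermite k * P).eval x * Real.exp (-(x ^ 2)) =
      (1 / 2) ^ k * ∫ x : ℝ, (derivative^[k] P).eval x * Real.exp (-(x ^ 2)) := by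
  induction k generalizing P with
  | zero => simp [monicHermite]
  | succ k ih =>
    have hrec (x : ℝ) : (monicHermite (k + 1) * P).eval x * Real.exp (-(x ^ 2)) =
        (X * (monicHermite k * P)).eval x * Real.exp (-(x ^ 2)) -
          1 / 2 * ((derivative (monicHermite k) * P).eval x * Real.exp (-(x ^ 2))) := by
      simp only [monicHermite, eval_mul, eval_sub, eval_X, eval_C]
      ring
    simp only [hrec]
    rw [integral_sub (integrable_eval_mul_exp_neg_sq _)
      ((integrable_eval_mul_exp_neg_sq _).const_mul _), integral_const_mul,
      integral_X_mul_mul_exp_neg_sq, derivative_mul]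
    simp only [eval_add, add_mul]
    rw [integral_add (integrable_eval_mul_exp_neg_sq _) (integrable_eval_mul_exp_neg_sq _),
      ih (derivative P), Function.iterate_succ_apply]
    ring

lemma iterate_derivative_eq_factorial_of_monic {P : ℝ[X]} (hP : P.Monic) :
    derivative^[P.natDegree] P = C (P.natDegree.factorial : ℝ) := by
  have hdeg := natDegree_iterate_derivative P P.natDegree
  rw [Nat.sub_self, Nat.le_zero] at hdeg
  rw [eq_C_of_natDegree_eq_zero hdeg, coeff_iterate_derivative]
  simp [hP.coeff_natDegree, Nat.descFactorial_self]

lemma integral_monicHermite_mul_self (k : ℕ) :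
    ∫ x : ℝ, (monicHermite k * monicHermite k).eval x * Real.exp (-(x ^ 2)) =
      k.factorial * (1 / 2) ^ k * √π := by
  have hgauss := integral_gaussian 1
  simp only [neg_mul, one_mul, div_one] at hgauss
  have hder := iterate_derivative_eq_factorial_of_monic (monicHermite_monic_and_natDegree k).1
  rw [(monicHermite_monic_and_natDegree k).2] at hder
  rw [integral_monicHermite_mul, hder]
  simp only [eval_C]
  rw [integral_const_mul, hgauss]
  ring

lemma integral_monicHermite_mul_of_lt {j k : ℕ} (h : j < k) :
    ∫ x : ℝ, (monicHermite k * monicHermite j).eval x * Real.exp (-(x ^ 2)) = 0 := by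
  rw [integral_monicHermite_mul,
    iterate_derivative_eq_zero ((monicHermite_monic_and_natDegree j).2.trans_lt h)]
  simp

lemma integral_vdm_sq_mul_prod_exp_neg_sq (p : ℕ) :
    ∫ ξ : Fin p → ℝ, vdm ξ ^ 2 * ∏ i, Real.exp (-(ξ i ^ 2)) =
      p.factorial * ∏ i : Fin p, ((i : ℕ).factorial * (1 / 2) ^ (i : ℕ) * √π) := by
  rw [volume_pi, integral_vdm_sq_mul_prod volume (f := fun x ↦ x)
    (fun k ↦ (monicHermite_monic_and_natDegree k).1)
    (fun k ↦ (monicHermite_monic_and_natDegree k).2)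
    fun j k ↦ integrable_eval_mul_exp_neg_sq (monicHermite j * monicHermite k)]
  have hdiag : (Matrix.of fun i j : Fin p ↦
      ∫ x : ℝ, (monicHermite i * monicHermite j).eval x * Real.exp (-(x ^ 2))) =
      Matrix.diagonal fun i : Fin p ↦ (i : ℕ).factorial * (1 / 2) ^ (i : ℕ) * √π := by
    ext i j
    rw [Matrix.of_apply]
    rcases lt_trichotomy j i with h | rfl | h
    · rw [integral_monicHermite_mul_of_lt h, Matrix.diagonal_apply_ne _ h.ne']
    · rw [integral_monicHermite_mul_self, Matrix.diagonal_apply_eq]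
    · rw [mul_comm (monicHermite i), integral_monicHermite_mul_of_lt h,
        Matrix.diagonal_apply_ne _ h.ne]
  rw [hdiag, Matrix.det_diagonal]

end HermitePolynomials

section TruncatedMoments

open Polynomial

variable {ι : Type*} {l : Filter ι} {μ : ι → Measure ℝ} {ν : Measure ℝ}

lemma setLIntegral_Ici_sub_pow (ν : Measure ℝ) (s : ℝ) {k : ℕ} (hk : 0 < k) :
    ∫⁻ y in Set.Ici s, ENNReal.ofReal ((y - s) ^ k) ∂ν =
      ENNReal.ofReal k *
        ∫⁻ t in Set.Ioi 0, ν (Set.Ici (s + t)) * ENNReal.ofReal (t ^ ((k : ℝ) - 1)) := by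
  have hnonneg : 0 ≤ᵐ[ν.restrict (Set.Ici s)] fun y ↦ y - s :=
    (ae_restrict_mem measurableSet_Ici).mono fun y hy ↦ sub_nonneg.2 hy
  have hlayer := lintegral_rpow_eq_lintegral_meas_le_mul (ν.restrict (Set.Ici s)) hnonneg
    (by fun_prop) (Nat.cast_pos.2 hk)
  simp only [rpow_natCast] at hlayer
  rw [hlayer]
  refine congrArg _ (setLIntegral_congr_fun measurableSet_Ioi fun t (ht : 0 < t) ↦ ?_)
  have hset : {y : ℝ | t ≤ y - s} = Set.Ici (s + t) :=
    Set.ext fun y ↦ (le_sub_iff_add_le' : t ≤ y - s ↔ s + t ≤ y)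
  simp only [hset]
  rw [Measure.restrict_apply measurableSet_Ici, Set.Ici_inter_Ici,
    sup_eq_left.2 (by linarith : s ≤ s + t)]

lemma tendsto_setLIntegral_Ici_sub_pow [l.IsCountablyGenerated] {c : ℝ}
    (hlim : ∀ t, Tendsto (fun n ↦ μ n (Set.Ici t)) l (𝓝 (ν (Set.Ici t))))
    (htail : ∀ᶠ n in l, ∀ t, μ n (Set.Ici t) ≤ ENNReal.ofReal (c * exp (-t))) (s : ℝ) (k : ℕ) :
    Tendsto (fun n ↦ ∫⁻ y in Set.Ici s, ENNReal.ofReal ((y - s) ^ k) ∂μ n) l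
      (𝓝 (∫⁻ y in Set.Ici s, ENNReal.ofReal ((y - s) ^ k) ∂ν)) := by
  rcases k.eq_zero_or_pos with rfl | hk
  · simpa using hlim s
  simp only [setLIntegral_Ici_sub_pow _ s hk]
  refine ENNReal.Tendsto.const_mul ?_ (.inr ENNReal.ofReal_ne_top)
  refine tendsto_lintegral_filter_of_dominated_convergence
    (fun t ↦ ENNReal.ofReal (c * exp (-(s + t))) * ENNReal.ofReal (t ^ ((k : ℝ) - 1)))
    (.of_forall fun n ↦ ?_) ?_ ?_ (.of_forall fun t ↦ ?_)
  · have hanti : Antitone fun t ↦ μ n (Set.Ici (s + t)) := fun t t' h ↦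
      measure_mono (Set.Ici_subset_Ici.2 (add_le_add_right h s))
    exact hanti.measurable.mul (by fun_prop)
  · filter_upwards [htail] with n hn
    refine .of_forall fun t ↦ ?_
    gcongr
    exact hn _
  · have hGamma := (GammaIntegral_convergent (Nat.cast_pos.2 hk)).const_mul (c * exp (-s))
    refine ne_of_eq_of_ne ?_ hGamma.lintegral_lt_top.ne
    refine setLIntegral_congr_fun measurableSet_Ioi fun t (ht : 0 < t) ↦ ?_
    rw [← ENNReal.ofReal_mul' (by positivity), neg_add, Real.exp_add]
    congr 1
    ring
  · exact ENNReal.Tendsto.mul_const (hlim _) (.inr ENNReal.ofReal_ne_top)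

lemma setIntegral_Ici_sub_pow_eq_toReal (ν : Measure ℝ) (s : ℝ) (k : ℕ) :
    ∫ y in Set.Ici s, (y - s) ^ k ∂ν =
      (∫⁻ y in Set.Ici s, ENNReal.ofReal ((y - s) ^ k) ∂ν).toReal :=
  integral_eq_lintegral_of_nonneg_ae
    ((ae_restrict_mem measurableSet_Ici).mono fun _ hy ↦ pow_nonneg (sub_nonneg.2 hy) k)
    (by fun_prop)

lemma tendsto_setIntegral_Ici_sub_pow [l.IsCountablyGenerated] {c : ℝ}
    (hlim : ∀ t, Tendsto (fun n ↦ μ n (Set.Ici t)) l (𝓝 (ν (Set.Ici t))))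
    (htail : ∀ᶠ n in l, ∀ t, μ n (Set.Ici t) ≤ ENNReal.ofReal (c * exp (-t))) {s : ℝ} {k : ℕ}
    (hν : IntegrableOn (fun y ↦ (y - s) ^ k) (Set.Ici s) ν) :
    Tendsto (fun n ↦ ∫ y in Set.Ici s, (y - s) ^ k ∂μ n) l
      (𝓝 (∫ y in Set.Ici s, (y - s) ^ k ∂ν)) := by
  simp only [setIntegral_Ici_sub_pow_eq_toReal]
  exact (ENNReal.tendsto_toReal hν.lintegral_lt_top.ne).comp
    (tendsto_setLIntegral_Ici_sub_pow hlim htail s k)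

lemma eval_pow_mul_prod_add (s : ℝ) (δ : ℕ → ℝ) (j m : ℕ) (y : ℝ) :
    ((X - C s) ^ j * ∏ k ∈ Finset.range m, (X - C s + C (δ k))).eval y =
      (y - s) ^ j * ∏ k ∈ Finset.range m, (y - s + δ k) := by
  simp only [eval_mul, eval_pow, eval_prod, eval_add, eval_sub, eval_X, eval_C]

lemma tendsto_integral_pow_mul_prod_add {s : ℝ} {a : ℕ → ℝ} {δ : ι → ℕ → ℝ}
    (hinteg : ∀ n (P : ℝ[X]), Integrable (fun y ↦ P.eval y) (μ n))
    (hmoment : ∀ j, Tendsto (fun n ↦ ∫ y, (y - s) ^ j ∂μ n) l (𝓝 (a j)))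
    (hδ : ∀ k, Tendsto (fun n ↦ δ n k) l (𝓝 0)) (m j : ℕ) :
    Tendsto (fun n ↦ ∫ y, (y - s) ^ j * ∏ k ∈ Finset.range m, (y - s + δ n k) ∂μ n) l
      (𝓝 (a (j + m))) := by
  induction m generalizing j with
  | zero => simpa using hmoment j
  | succ m ih =>
    have hinteg' (n : ι) (j : ℕ) : Integrable
        (fun y ↦ (y - s) ^ j * ∏ k ∈ Finset.range m, (y - s + δ n k)) (μ n) := by
      simp only [← eval_pow_mul_prod_add s (δ n)]
      exact hinteg n _
    have hsplit (n : ι) :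
        ∫ y, (y - s) ^ j * ∏ k ∈ Finset.range (m + 1), (y - s + δ n k) ∂μ n =
          ∫ y, (y - s) ^ (j + 1) * ∏ k ∈ Finset.range m, (y - s + δ n k) ∂μ n +
            δ n m * ∫ y, (y - s) ^ j * ∏ k ∈ Finset.range m, (y - s + δ n k) ∂μ n := by
      rw [← integral_const_mul, ← integral_add (hinteg' n _) ((hinteg' n _).const_mul _)]
      refine integral_congr_ae (.of_forall fun y ↦ ?_)
      simp only [Finset.prod_range_succ]
      ring
    simpa [hsplit, add_right_comm, ← add_assoc] using (ih (j + 1)).add ((hδ m).mul (ih j))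

lemma integrable_eval_of_integrable_exp_mul
    (hν : ∀ t, Integrable (fun y ↦ exp (t * y)) ν) (P : ℝ[X]) :
    Integrable (fun y ↦ P.eval y) ν := by
  simp only [eval_eq_sum_range]
  exact integrable_finsetSum _ fun k _ ↦
    (ProbabilityTheory.integrable_pow_of_integrable_exp_mul one_ne_zero (hν 1) (hν (-1))
      k).const_mul _

end TruncatedMoments

section PoissonCentralLimit

open ProbabilityTheory

open scoped NNReal

/-- The law of `(h - r) / √(2 r)` for a Poisson variable `h` of rate `r`; the normalisation makes
its variance `1 / 2`, so that the limiting density is proportional to `exp (-y ^ 2)`. -/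
def scaledPoisson (r : ℝ≥0) : Measure ℝ :=
  (poissonMeasure r).map fun h : ℕ ↦ ((h : ℝ) - r) / √(2 * r)

instance (r : ℝ≥0) : IsProbabilityMeasure (scaledPoisson r) :=
  Measure.isProbabilityMeasure_map .of_discrete

lemma mul_div_sqrt_two_mul_sq {r : ℝ} (hr : 0 < r) (t : ℝ) :
    r * (t / √(2 * r)) ^ 2 = t ^ 2 / 2 := by
  rw [div_pow, sq_sqrt (by positivity)]
  field_simp

lemma charFun_scaledPoisson (r : ℝ≥0) (t : ℝ) :
    charFun (scaledPoisson r) t =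
      Complex.exp (r * (Complex.exp ((t / √(2 * r) : ℝ) * Complex.I) - 1 -
        (t / √(2 * r) : ℝ) * Complex.I)) := by
  have hpoisson := charFun_map_cast_poissonMeasure r (t / √(2 * r))
  rw [charFun_apply_real, integral_map .of_discrete (by fun_prop)] at hpoisson
  have hexp (h : ℕ) : Complex.exp (t * (((h : ℝ) - r) / √(2 * r) : ℝ) * Complex.I) =
      Complex.exp ((t / √(2 * r) : ℝ) * (h : ℝ) * Complex.I) *
        Complex.exp (-(r * ((t / √(2 * r) : ℝ) * Complex.I))) := by
    rw [← Complex.exp_add]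
    congr 1
    push_cast
    ring
  rw [scaledPoisson, charFun_apply_real, integral_map .of_discrete (by fun_prop)]
  simp only [hexp]
  rw [integral_mul_const, hpoisson, ← Complex.exp_add]
  congr 1
  ring

lemma norm_exp_mul_I_sub_taylor_le {u : ℝ} (hu : |u| ≤ 1) :
    ‖Complex.exp (u * Complex.I) - (1 + u * Complex.I - u ^ 2 / 2)‖ ≤ |u| ^ 3 / 3 := by
  have hnorm : ‖(u : ℂ) * Complex.I‖ = |u| := by simp
  have hbound := Complex.exp_bound' (x := u * Complex.I) (n := 3)
    (by rw [hnorm]; push_cast; linarith)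
  have htaylor : ∑ m ∈ Finset.range 3, ((u : ℂ) * Complex.I) ^ m / (m.factorial : ℂ) =
      1 + u * Complex.I - u ^ 2 / 2 := by
    simp only [Finset.sum_range_succ, Finset.sum_range_zero, Nat.factorial, mul_pow,
      Complex.I_sq]
    push_cast
    ring
  rw [htaylor, hnorm] at hbound
  exact hbound.trans_eq (by norm_num [Nat.factorial]; ring)

lemma tendsto_sqrt_two_mul_atTop : Tendsto (fun r : ℝ≥0 ↦ √(2 * r)) atTop atTop :=
  tendsto_sqrt_atTop.comp
    ((NNReal.tendsto_coe_atTop.2 tendsto_id).const_mul_atTop two_pos)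

lemma tendsto_charFun_scaledPoisson (t : ℝ) :
    Tendsto (fun r ↦ charFun (scaledPoisson r) t) atTop
      (𝓝 (charFun (gaussianReal 0 (1 / 2)) t)) := by
  simp only [charFun_scaledPoisson, charFun_gaussianReal]
  refine (Complex.continuous_exp.tendsto _).comp ?_
  rw [tendsto_iff_norm_sub_tendsto_zero]
  refine squeeze_zero' (.of_forall fun r ↦ norm_nonneg _) ?_
    (tendsto_sqrt_two_mul_atTop.const_div_atTop (|t| ^ 3 / 6))
  filter_upwards [eventually_gt_atTop 0,
    tendsto_sqrt_two_mul_atTop.eventually_ge_atTop |t|] with r hr ht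
  have hr' : (0 : ℝ) < r := hr
  have hsqrt : 0 < √(2 * r : ℝ) := by positivity
  have hru := mul_div_sqrt_two_mul_sq hr' t
  have habs : |t / √(2 * r)| = |t| / √(2 * r) := by rw [abs_div, abs_of_pos hsqrt]
  set u : ℝ := t / √(2 * r)
  have hu : |u| ≤ 1 := habs ▸ (div_le_one hsqrt).2 ht
  have hruC : (r : ℂ) * (u : ℂ) ^ 2 = t ^ 2 / 2 := by exact_mod_cast hru
  have hremainder : (r : ℂ) * (Complex.exp (u * Complex.I) - 1 - u * Complex.I) -
      (t * (0 : ℝ) * Complex.I - (1 / 2 : ℝ≥0) * t ^ 2 / 2) =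
      (r : ℝ) * (Complex.exp (u * Complex.I) - (1 + u * Complex.I - u ^ 2 / 2)) := by
    push_cast
    linear_combination (-1 / 2 : ℂ) * hruC
  rw [hremainder, norm_mul, Complex.norm_real, norm_of_nonneg hr'.le]
  calc (r : ℝ) * _ ≤ r * (|u| ^ 3 / 3) := by gcongr; exact norm_exp_mul_I_sub_taylor_le hu
    _ = r * u ^ 2 * |u| / 3 := by rw [← sq_abs u]; ring
    _ = |t| ^ 3 / 6 / √(2 * r) := by rw [hru, habs, ← sq_abs t]; ring

lemma tendsto_scaledPoisson_Ici (t : ℝ) :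
    Tendsto (fun r ↦ scaledPoisson r (Set.Ici t)) atTop
      (𝓝 (gaussianReal 0 (1 / 2) (Set.Ici t))) := by
  refine tendsto_of_seq_tendsto fun r hr ↦ ?_
  let P (n : ℕ) : ProbabilityMeasure ℝ := ⟨scaledPoisson (r n), inferInstance⟩
  let P₀ : ProbabilityMeasure ℝ := ⟨gaussianReal 0 (1 / 2), inferInstance⟩
  have hweak : Tendsto P atTop (𝓝 P₀) := ProbabilityMeasure.tendsto_of_tendsto_charFun
    fun t ↦ (tendsto_charFun_scaledPoisson t).comp hr
  have : NullSingletonClass (gaussianReal 0 (1 / 2)) :=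
    nullSingletonClass_gaussianReal (by norm_num)
  refine ProbabilityMeasure.tendsto_measure_of_null_frontier_of_tendsto' hweak ?_
  rw [frontier_Ici]
  exact measure_singleton (μ := gaussianReal 0 (1 / 2)) t

lemma hasSum_exp_mul_poisson (r : ℝ≥0) (t : ℝ) :
    HasSum (fun h : ℕ ↦ exp (-r) * r ^ h / h.factorial * exp (t * h))
      (exp (r * (exp t - 1))) := by
  have hexp := (NormedSpace.expSeries_div_hasSum_exp (r * exp t : ℝ)).mul_left (exp (-r))
  rw [← Real.exp_eq_exp_ℝ, ← Real.exp_add] at hexp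
  convert! hexp using 1
  · ext h
    rw [mul_pow, mul_comm t, Real.exp_nat_mul]
    ring
  · congr 1
    ring

lemma integrable_exp_mul_poissonMeasure (r : ℝ≥0) (t : ℝ) :
    Integrable (fun h : ℕ ↦ exp (t * h)) (poissonMeasure r) := by
  rw [integrable_poissonMeasure_iff]
  simpa only [norm_eq_abs, abs_exp] using (hasSum_exp_mul_poisson r t).summable

lemma mgf_natCast_poissonMeasure (r : ℝ≥0) (t : ℝ) :
    mgf (fun h : ℕ ↦ (h : ℝ)) (poissonMeasure r) t = exp (r * (exp t - 1)) := by
  rw [mgf, integral_poissonMeasure]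
  exact (hasSum_exp_mul_poisson r t).tsum_eq

lemma exp_mul_sub_div (h r t c : ℝ) :
    exp (t * ((h - r) / c)) = exp (t / c * h) * exp (-(r * (t / c))) := by
  rw [← Real.exp_add]
  congr 1
  ring

lemma integrable_exp_mul_scaledPoisson (r : ℝ≥0) (t : ℝ) :
    Integrable (fun y ↦ exp (t * y)) (scaledPoisson r) := by
  rw [scaledPoisson, integrable_map_measure (by fun_prop) .of_discrete]
  simp only [Function.comp_def, exp_mul_sub_div]
  exact (integrable_exp_mul_poissonMeasure r _).mul_const _

lemma mgf_id_scaledPoisson (r : ℝ≥0) (t : ℝ) :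
    mgf id (scaledPoisson r) t = exp (r * (exp (t / √(2 * r)) - 1 - t / √(2 * r))) := by
  rw [scaledPoisson, mgf_id_map .of_discrete, mgf]
  simp only [exp_mul_sub_div]
  rw [integral_mul_const, ← mgf, mgf_natCast_poissonMeasure, ← Real.exp_add]
  congr 1
  ring

lemma scaledPoisson_Ici_le {r : ℝ≥0} (hr : 1 / 2 ≤ r) (t : ℝ) :
    scaledPoisson r (Set.Ici t) ≤ ENNReal.ofReal (exp 1 * exp (-t)) := by
  have : (1 / 2 : ℝ) ≤ r := by exact_mod_cast hr
  have hsqrt : 1 ≤ √(2 * r : ℝ) := one_le_sqrt.2 (by linarith)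
  have hmgf : mgf id (scaledPoisson r) 1 ≤ exp 1 := by
    rw [mgf_id_scaledPoisson, Real.exp_le_exp]
    have hu : |1 / √(2 * r : ℝ)| ≤ 1 := by
      rw [abs_of_pos (by positivity)]
      exact (div_le_one (by positivity)).2 hsqrt
    have hquad := (abs_le.1 (abs_exp_sub_one_sub_id_le hu)).2
    have hru := mul_div_sqrt_two_mul_sq (r := r) (by linarith) 1
    calc (r : ℝ) * _ ≤ r * (1 / √(2 * r)) ^ 2 := by gcongr
      _ ≤ 1 := by rw [hru]; norm_num
  have hchernoff := measure_ge_le_exp_mul_mgf t zero_le_one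
    (integrable_exp_mul_scaledPoisson r 1)
  rw [ENNReal.le_ofReal_iff_toReal_le (measure_ne_top _ _) (by positivity)]
  calc (scaledPoisson r).real (Set.Ici t) ≤ exp (-1 * t) * mgf id (scaledPoisson r) 1 := hchernoff
    _ ≤ exp (-t) * exp 1 := by rw [neg_one_mul]; gcongr
    _ = exp 1 * exp (-t) := mul_comm _ _

lemma setIntegral_gaussianReal_zero_half {S : Set ℝ} (hS : MeasurableSet S) (f : ℝ → ℝ) :
    ∫ y in S, f y ∂gaussianReal 0 (1 / 2) = (√π)⁻¹ * ∫ y in S, f y * exp (-(y ^ 2)) := by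
  rw [← integral_indicator hS, integral_gaussianReal_eq_integral_smul (by norm_num),
    ← integral_indicator hS, ← integral_const_mul]
  refine integral_congr_ae (.of_forall fun y ↦ ?_)
  have hvar : (2 : ℝ) * ((1 / 2 : ℝ≥0) : ℝ) = 1 := by norm_num
  simp only [gaussianPDFReal, mul_right_comm 2 π, hvar, one_mul, sub_zero, div_one, smul_eq_mul,
    Set.indicator]
  split_ifs <;> ring

lemma tendsto_setIntegral_scaledPoisson (s : ℝ) (m j : ℕ) :
    Tendsto (fun r : ℝ≥0 ↦ ∫ y in Set.Ici s,
        (y - s) ^ j * ∏ k ∈ Finset.range m, (y - s + (k + 1) / √(2 * r)) ∂scaledPoisson r) atTop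
      (𝓝 ((√π)⁻¹ * ∫ y in Set.Ici s, (y - s) ^ (j + m) * exp (-(y ^ 2)))) := by
  rw [← setIntegral_gaussianReal_zero_half measurableSet_Ici]
  have hgauss (k : ℕ) : Integrable (fun y ↦ (y - s) ^ k) (gaussianReal 0 (1 / 2)) := by
    simpa only [Polynomial.eval_pow, Polynomial.eval_sub, Polynomial.eval_X, Polynomial.eval_C]
      using integrable_eval_of_integrable_exp_mul integrable_exp_mul_gaussianReal
        ((.X - .C s) ^ k)
  exact tendsto_integral_pow_mul_prod_add
    (fun r P ↦ (integrable_eval_of_integrable_exp_mul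
      (integrable_exp_mul_scaledPoisson r) P).integrableOn)
    (fun k ↦ tendsto_setIntegral_Ici_sub_pow tendsto_scaledPoisson_Ici
      ((eventually_ge_atTop _).mono fun r hr ↦ scaledPoisson_Ici_le hr) (hgauss k).integrableOn)
    (fun k ↦ tendsto_sqrt_two_mul_atTop.const_div_atTop _) m j

end PoissonCentralLimit

section Asymptotics

open ProbabilityTheory

open scoped NNReal

variable {p : ℕ} {s : ℝ}

/-- The `k`-th moment about `s` of `scaledPoisson r`, weighted by the rescaled strip weight of `m`
columns, for which the column bound is `y = s`. -/
def stripMoment (s : ℝ) (m : ℕ) (r : ℝ≥0) (k : ℕ) : ℝ :=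
  ∫ y in Set.Ici s,
    (y - s) ^ k * ∏ j ∈ Finset.range m, (y - s + (j + 1) / √(2 * r)) ∂scaledPoisson r

lemma integrable_stripMoment (s : ℝ) (m : ℕ) (r : ℝ≥0) (k : ℕ) :
    Integrable (fun y ↦ (y - s) ^ k * ∏ j ∈ Finset.range m, (y - s + (j + 1) / √(2 * r)))
      (scaledPoisson r) := by
  simp only [← eval_pow_mul_prod_add s (fun j ↦ (j + 1) / √(2 * r))]
  exact integrable_eval_of_integrable_exp_mul (integrable_exp_mul_scaledPoisson r) _

lemma pow_mul_stripWeight {r : ℝ≥0} (hr : r ≠ 0) {c : ℕ} (hc : (c : ℝ) = r + s * √(2 * r))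
    (m k h : ℕ) :
    ((h : ℝ) - c) ^ k * stripWeight c m h = √(2 * r) ^ m * √(2 * r) ^ k *
      (Set.Ici s).indicator
        (fun y ↦ (y - s) ^ k * ∏ j ∈ Finset.range m, (y - s + (j + 1) / √(2 * r)))
        (((h : ℝ) - r) / √(2 * r)) := by
  have : (0 : ℝ) < r := NNReal.coe_pos.2 (pos_iff_ne_zero.2 hr)
  have hsqrt : 0 < √(2 * r : ℝ) := by positivity
  have hscale : (h : ℝ) - c = √(2 * r) * (((h : ℝ) - r) / √(2 * r) - s) := by
    rw [hc]
    field_simp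
    ring
  have hmem : c ≤ h ↔ s ≤ ((h : ℝ) - r) / √(2 * r) := by
    rw [le_div_iff₀ hsqrt, le_sub_iff_add_le', ← hc, Nat.cast_le]
  simp only [stripWeight, Set.indicator, Set.mem_Ici, hmem, hscale]
  split_ifs
  · have hfactor (y : ℝ) : ∏ j ∈ Finset.range m, (√(2 * r) * y + (j + 1)) =
        √(2 * r) ^ m * ∏ j ∈ Finset.range m, (y + (j + 1) / √(2 * r)) := by
      rw [Finset.pow_eq_prod_const, Finset.prod_range, Finset.prod_range, Finset.prod_range,
        ← Finset.prod_mul_distrib]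
      refine Finset.prod_congr rfl fun j _ ↦ ?_
      field_simp
    rw [hfactor, mul_pow]
    ring
  · simp

lemma integrable_pow_mul_stripWeight {r : ℝ≥0} (hr : r ≠ 0) {c : ℕ}
    (hc : (c : ℝ) = r + s * √(2 * r)) (m k : ℕ) :
    Integrable (fun h : ℕ ↦ ((h : ℝ) - c) ^ k * stripWeight c m h) (poissonMeasure r) := by
  simp only [pow_mul_stripWeight hr hc]
  exact (((integrable_stripMoment s m r k).indicator measurableSet_Ici).comp_aemeasurable
    .of_discrete).const_mul _

lemma integral_pow_mul_stripWeight {r : ℝ≥0} (hr : r ≠ 0) {c : ℕ}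
    (hc : (c : ℝ) = r + s * √(2 * r)) (m k : ℕ) :
    ∫ h : ℕ, ((h : ℝ) - c) ^ k * stripWeight c m h ∂poissonMeasure r =
      √(2 * r) ^ m * √(2 * r) ^ k * stripMoment s m r k := by
  simp only [pow_mul_stripWeight hr hc]
  rw [integral_const_mul, stripMoment, ← integral_indicator measurableSet_Ici, scaledPoisson,
    integral_map .of_discrete
      ((integrable_stripMoment s m r k).indicator measurableSet_Ici).aestronglyMeasurable]

lemma Epois_indSup_mul_Hstrip (hp : p ≠ 0) {n q : ℕ} (hpq : p ≤ q) (hqn : q ≤ n) {r : ℝ≥0}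
    (hr : r ≠ 0) (hn : (n : ℝ) - p = r + s * √(2 * r)) :
    Epois r p (fun μ ↦ indSup n p μ * Hstrip n p q μ) =
      √(2 * r) ^ (p * (q - p)) * (∏ i : Fin p, ((i : ℕ).factorial * (1 / 2 : ℝ) ^ (i : ℕ)))⁻¹ *
        (hankel p (stripMoment s (q - p) r)).det := by
  have hc : ((n - p : ℕ) : ℝ) = r + s * √(2 * r) := by rw [Nat.cast_sub (hpq.trans hqn), hn]
  have : (r : ℝ) ≠ 0 := NNReal.coe_ne_zero.2 hr
  rw [Epois_eq_integral_vdm_sq hp hr (G := fun h ↦ ∏ i, stripWeight (n - p) (q - p) (h i))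
    (fun h σ ↦ Equiv.prod_comp σ fun i ↦ stripWeight (n - p) (q - p) (h i))
    (fun μ hμ ↦ indSup_mul_Hstrip hμ hpq hqn),
    integral_vdm_sq_mul_prod_eq_det_hankel _ _ (integrable_pow_mul_stripWeight hr hc (q - p))]
  simp only [integral_pow_mul_stripWeight hr hc]
  rw [det_hankel_mul_pow, sq_sqrt (by positivity), ← pow_mul, mul_comm (q - p) p]
  have hprod : ∏ i : Fin p, (2 * (r : ℝ)) ^ (i : ℕ) =
      (∏ i : Fin p, ((i : ℕ).factorial * (r : ℝ) ^ (i : ℕ))) *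
        (∏ i : Fin p, ((i : ℕ).factorial * (1 / 2 : ℝ) ^ (i : ℕ)))⁻¹ := by
    rw [← Finset.prod_inv_distrib, ← Finset.prod_mul_distrib]
    refine Finset.prod_congr rfl fun i _ ↦ ?_
    rw [mul_pow, one_div, inv_pow]
    field_simp
  have hprod_ne : ∏ i : Fin p, ((i : ℕ).factorial * (r : ℝ) ^ (i : ℕ)) ≠ 0 :=
    Finset.prod_ne_zero_iff.2 fun i _ ↦ by positivity
  rw [hprod]
  field_simp

lemma setIntegral_pi_Ici_vdm_sq_mul_prod (p m : ℕ) (s : ℝ) :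
    ∫ ξ in Set.univ.pi fun _ : Fin p ↦ Set.Ici s,
      vdm ξ ^ 2 * ∏ i, ((ξ i - s) ^ m * exp (-(ξ i ^ 2))) =
    p.factorial * (hankel p fun k ↦
      ∫ y in Set.Ici s, (y - s) ^ (k + m) * exp (-(y ^ 2))).det := by
  have hpow (k : ℕ) (y : ℝ) :
      (y - s) ^ k * ((y - s) ^ m * exp (-(y ^ 2))) = (y - s) ^ (k + m) * exp (-(y ^ 2)) := by
    ring
  have hinteg (k : ℕ) : Integrable (fun y ↦ (y - s) ^ (k + m) * exp (-(y ^ 2)))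
      (volume.restrict (Set.Ici s)) := by
    simpa only [Polynomial.eval_pow, Polynomial.eval_sub, Polynomial.eval_X, Polynomial.eval_C]
      using (integrable_eval_mul_exp_neg_sq ((.X - .C s) ^ (k + m))).restrict
  have hdet := integral_vdm_sq_mul_prod_eq_det_hankel (p := p) (volume.restrict (Set.Ici s))
    (f := fun y ↦ y) (w := fun y ↦ (y - s) ^ m * exp (-(y ^ 2))) s
    fun k ↦ by simpa only [hpow] using hinteg k
  simp only [hpow] at hdet
  rw [volume_pi, Measure.restrict_pi_pi]
  exact hdet

lemma tendsto_det_hankel_stripMoment (p m : ℕ) (s : ℝ) :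
    Tendsto (fun r ↦ (hankel p (stripMoment s m r)).det) atTop
      (𝓝 ((√π)⁻¹ ^ p * (hankel p fun k ↦
        ∫ y in Set.Ici s, (y - s) ^ (k + m) * exp (-(y ^ 2))).det)) := by
  have hlim := ((continuous_det_hankel p).tendsto _).comp
    (tendsto_pi_nhds.2 fun k ↦ tendsto_setIntegral_scaledPoisson s m k)
  have hscale := det_hankel_mul_pow p (√π)⁻¹ 1
    fun k ↦ ∫ y in Set.Ici s, (y - s) ^ (k + m) * exp (-(y ^ 2))
  simp only [one_pow, mul_one, Finset.prod_const_one] at hscale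
  rwa [hscale] at hlim

lemma tendsto_prod_inv_mul_det_hankel_stripMoment (p m : ℕ) (s : ℝ) :
    Tendsto (fun r ↦ (∏ i : Fin p, ((i : ℕ).factorial * (1 / 2 : ℝ) ^ (i : ℕ)))⁻¹ *
        (hankel p (stripMoment s m r)).det) atTop
      (𝓝 ((∫ ξ in Set.univ.pi fun _ : Fin p ↦ Set.Ici s,
          vdm ξ ^ 2 * ∏ i, ((ξ i - s) ^ m * exp (-(ξ i ^ 2)))) /
        ∫ ξ : Fin p → ℝ, vdm ξ ^ 2 * ∏ i, exp (-(ξ i ^ 2)))) := by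
  convert! (tendsto_det_hankel_stripMoment p m s).const_mul _ using 2
  rw [setIntegral_pi_Ici_vdm_sq_mul_prod, integral_vdm_sq_mul_prod_exp_neg_sq,
    Finset.prod_mul_distrib (g := fun _ ↦ √π), Finset.prod_const, Finset.card_univ,
    Fintype.card_fin, mul_div_mul_left _ _ (Nat.cast_ne_zero.2 p.factorial_ne_zero), inv_pow]
  field_simp

lemma tendsto_atTop_of_sub_eq_add_mul_sqrt {x : ℕ → ℝ}
    (hx : ∀ n, p < n → 0 < x n ∧ (n : ℝ) - p = x n + s * √(2 * x n)) :
    Tendsto x atTop atTop := by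
  have hlin : Tendsto (fun n : ℕ ↦ ((n : ℝ) - (p + s ^ 2)) / 2) atTop atTop :=
    (tendsto_atTop_add_const_right _ _ tendsto_natCast_atTop_atTop).atTop_div_const two_pos
  refine tendsto_atTop_mono' _ ?_ hlin
  filter_upwards [eventually_gt_atTop p] with n hn
  obtain ⟨hpos, heq⟩ := hx n hn
  have hsq : √(2 * x n) ^ 2 = 2 * x n := sq_sqrt (by positivity)
  nlinarith [sq_nonneg (s - √(2 * x n)), sq_nonneg s]

lemma rpow_neg_mul_sqrt_pow {y : ℝ} (hy : 0 < y) (k : ℕ) :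
    y ^ (-((k : ℝ) / 2)) * √y ^ k = 1 := by
  rw [sqrt_eq_rpow, ← rpow_natCast, ← rpow_mul hy.le, ← rpow_add hy,
    show -((k : ℝ) / 2) + 1 / 2 * k = 0 by ring, rpow_zero]

end Asymptotics

/-- with `x_n > 0` the positive solution of `n − p = x_n + s√(2x_n)`,
the rescaled Poissonized expectation `(2x_n)^{−p(q−p)/2} E_{x_n,p}(1_{λ⊇μ_n} H_n(λ))`
converges to a ratio of matrix-model integrals. -/
theorem statement4 (p q : ℕ) (hp : 1 ≤ p) (hpq : p ≤ q) (s : ℝ) (x : ℕ → ℝ)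
    (hx : ∀ n : ℕ, p < n →
      0 < x n ∧ (n : ℝ) - p = x n + s * Real.sqrt (2 * x n)) :
    Filter.Tendsto
      (fun n : ℕ => (2 * x n) ^ (-((p : ℝ) * ((q : ℝ) - p) / 2)) *
        Epois (x n) p (fun lam => indSup n p lam * (Hstrip n p q lam : ℝ)))
      Filter.atTop
      (nhds
        ((∫ ξ in Set.univ.pi fun _ : Fin p => Set.Ici s,
            vdm ξ ^ 2 * ∏ i, ((ξ i - s) ^ (q - p) * Real.exp (-(ξ i ^ 2)))) /
          ∫ ξ : Fin p → ℝ, vdm ξ ^ 2 * ∏ i, Real.exp (-(ξ i ^ 2)))) := by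
  have hrate : Tendsto (fun n ↦ (x n).toNNReal) atTop atTop :=
    tendsto_real_toNNReal_atTop.comp (tendsto_atTop_of_sub_eq_add_mul_sqrt hx)
  refine ((tendsto_prod_inv_mul_det_hankel_stripMoment p (q - p) s).comp hrate).congr' ?_
  filter_upwards [eventually_gt_atTop p, eventually_ge_atTop q] with n hpn hqn
  obtain ⟨hpos, hsol⟩ := hx n hpn
  have hcoe : ((x n).toNNReal : ℝ) = x n := coe_toNNReal _ hpos.le
  have hexpect := Epois_indSup_mul_Hstrip (Nat.one_le_iff_ne_zero.1 hp) hpq hqn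
    (toNNReal_pos.2 hpos).ne' (hcoe.symm ▸ hsol)
  have hcancel := rpow_neg_mul_sqrt_pow (mul_pos two_pos hpos) (p * (q - p))
  rw [hcoe] at hexpect
  push_cast [hpq] at hcancel
  rw [hexpect, ← mul_assoc, ← mul_assoc, hcancel, one_mul, Function.comp_apply]

end
end

section
/- Let p, q ≥ 1 be integers and u a real (or complex) number with |u| < 1. Then Σ_{κ} u^{|κ|} (p)_κ (q)_κ / (h^κ)² = (1 − u)^{−pq}, where the sum is over all partitions κ (only partitions with at most min(p,q) parts contribute, since (p)_κ = 0 otherwise), and the series converges absolutely. -/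
open MeasureTheory Filter Real
open scoped BigOperators Topology

noncomputable section

/-!
Let `p ≤ q = p + a`. A partition `κ` with at most `p` parts is encoded by its beta numbers
`b_0 < ⋯ < b_{p-1}`. Since `h^κ · ∏_{i<j} (b_j - b_i) = ∏ b_i!`, both `(p)_κ / h^κ` and
`(q)_κ / h^κ` are determinants of binomial coefficients, `det C(b_k, i)` and
`det C(b_k + a + i, a + i)`, and the factor `u^{|κ|}` can be absorbed into the first one. The
Cauchy–Binet formula then turns the sum over all sets of beta numbers into the determinant of the
matrix of negative binomial series `∑_m C(m, i) u^{m-i} C(m + a + j, a + j) =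
C(a + j + i, i) (1 - u)^{-(a + j + i + 1)}`, which reduces to `(1 - u)^{-p(p + a)}` by pulling out
powers of `1 - u` from rows and columns.
-/

section CauchyBinet

variable {R α : Type*} {n : ℕ}

lemma summable_norm_prod_pi [NormedCommRing R] {β : Fin n → Type*} {f : ∀ i, β i → R}
    (hf : ∀ i, Summable fun x => ‖f i x‖) :
    Summable fun l : ∀ i, β i => ‖∏ i, f i (l i)‖ := by
  induction n with
  | zero => exact Summable.of_finite
  | succ n ih =>
    rw [← (Fin.consEquiv β).summable_iff]
    refine ((hf 0).mul_norm (ih fun i => hf i.succ)).congr fun x => ?_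
    simp [Fin.prod_univ_succ, Fin.consEquiv]

lemma hasSum_prod_pi [NormedCommRing R] [CompleteSpace R] {β : Fin n → Type*}
    {f : ∀ i, β i → R} {s : Fin n → R} (hf : ∀ i, Summable fun x => ‖f i x‖)
    (hs : ∀ i, HasSum (f i) (s i)) :
    HasSum (fun l : ∀ i, β i => ∏ i, f i (l i)) (∏ i, s i) := by
  induction n with
  | zero => simp [hasSum_unique]
  | succ n ih =>
    let tail (l : ∀ i : Fin n, β i.succ) : R := ∏ i, f i.succ (l i)
    have hasSum_tail : HasSum tail (∏ i : Fin n, s i.succ) := ih (fun i => hf i.succ) fun i => hs _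
    have summable_norm_tail : Summable fun l => ‖tail l‖ := summable_norm_prod_pi fun i => hf i.succ
    have hmul := (hs 0).mul hasSum_tail (summable_mul_of_summable_norm (hf 0) summable_norm_tail)
    rw [Fin.prod_univ_succ, ← (Fin.consEquiv β).hasSum_iff]
    refine hmul.congr_fun fun x => ?_
    simp [tail, Fin.prod_univ_succ, Fin.consEquiv]

lemma hasSum_det_mul_prod [NormedCommRing R] [CompleteSpace R] {f g : Fin n → α → R}
    {M : Matrix (Fin n) (Fin n) R} (hfg : ∀ i j, Summable fun x => ‖f i x * g j x‖)
    (hM : ∀ i j, HasSum (fun x => f i x * g j x) (M i j)) :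
    HasSum (fun l : Fin n → α => (Matrix.of fun k i => f i (l k)).det * ∏ k, g k (l k)) M.det := by
  have hasSum_perm (σ : Equiv.Perm (Fin n)) :
      HasSum (fun l : Fin n → α => (σ.sign : R) * ∏ k, f (σ k) (l k) * g k (l k))
        ((σ.sign : R) * ∏ k, M (σ k) k) :=
    (hasSum_prod_pi (fun k => hfg (σ k) k) fun k => hM (σ k) k).mul_left _
  rw [Matrix.det_apply']
  refine (hasSum_sum fun σ _ => hasSum_perm σ).congr_fun fun l => ?_
  rw [← Matrix.det_transpose, Matrix.det_apply', Finset.sum_mul]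
  simp only [Finset.prod_mul_distrib, mul_assoc, Matrix.transpose_apply, Matrix.of_apply]

lemma sum_perm_det_mul_prod [CommRing R] (f g : Fin n → α → R) (l : Fin n → α) :
    ∑ σ : Equiv.Perm (Fin n),
        (Matrix.of fun k i => f i (l (σ k))).det * ∏ k, g k (l (σ k)) =
      (Matrix.of fun k i => f i (l k)).det * (Matrix.of fun k j => g j (l k)).det := by
  rw [Matrix.det_apply' (Matrix.of fun k j => g j (l k)), Finset.mul_sum]
  refine Finset.sum_congr rfl fun σ _ => ?_
  have hperm := Matrix.det_permute σ (Matrix.of fun k i => f i (l k))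
  simp only [Matrix.submatrix, Matrix.of_apply, id] at hperm
  rw [hperm]
  simp only [Matrix.of_apply]
  ring

lemma orderEmbedding_comp_perm_injective [LinearOrder α] :
    Function.Injective fun x : (Fin n ↪o α) × Equiv.Perm (Fin n) => (x.1 ∘ x.2 : Fin n → α) := by
  rintro ⟨d, σ⟩ ⟨e, τ⟩ (h : d ∘ σ = e ∘ τ)
  obtain rfl : d = e := by
    rw [← OrderEmbedding.range_inj, ← σ.surjective.range_comp d, h, τ.surjective.range_comp e]
  obtain rfl : σ = τ := Equiv.ext fun i => d.injective (congrFun h i)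
  rfl

lemma exists_orderEmbedding_comp_perm_eq [LinearOrder α] {l : Fin n → α}
    (hl : Function.Injective l) : ∃ (e : Fin n ↪o α) (σ : Equiv.Perm (Fin n)), e ∘ σ = l := by
  have hmono : StrictMono (l ∘ Tuple.sort l) :=
    (Tuple.monotone_sort l).strictMono_of_injective (hl.comp (Tuple.sort l).injective)
  exact ⟨OrderEmbedding.ofStrictMono _ hmono, (Tuple.sort l).symm, by ext; simp⟩

lemma hasSum_orderEmbedding_sum_perm [LinearOrder α] [AddCommMonoid R] [TopologicalSpace R]
    [ContinuousAdd R] [RegularSpace R] {F : (Fin n → α) → R} {s : R} (hF : HasSum F s)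
    (hzero : ∀ l, ¬ Function.Injective l → F l = 0) :
    HasSum (fun e : Fin n ↪o α => ∑ σ : Equiv.Perm (Fin n), F (e ∘ σ)) s := by
  rw [← orderEmbedding_comp_perm_injective.hasSum_iff] at hF
  · exact hF.prod_fiberwise fun e => hasSum_fintype _
  · intro l hl
    refine hzero l fun hinj => hl ?_
    obtain ⟨e, σ, h⟩ := exists_orderEmbedding_comp_perm_eq hinj
    exact ⟨(e, σ), h⟩

/-- The Cauchy–Binet formula for infinitely many columns, also known as Andréief's identity. -/
theorem hasSum_det_mul_det [NormedCommRing R] [CompleteSpace R] [LinearOrder α]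
    {f g : Fin n → α → R} {M : Matrix (Fin n) (Fin n) R}
    (hfg : ∀ i j, Summable fun x => ‖f i x * g j x‖)
    (hM : ∀ i j, HasSum (fun x => f i x * g j x) (M i j)) :
    HasSum (fun e : Fin n ↪o α =>
      (Matrix.of fun k i => f i (e k)).det * (Matrix.of fun k j => g j (e k)).det) M.det := by
  have hzero (l : Fin n → α) (hl : ¬ Function.Injective l) :
      (Matrix.of fun k i => f i (l k)).det * ∏ k, g k (l k) = 0 := by
    obtain ⟨i, j, hij, hne⟩ := Function.not_injective_iff.1 hl
    rw [Matrix.det_zero_of_row_eq hne (by ext; simp [hij]), zero_mul]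
  refine (hasSum_orderEmbedding_sum_perm (hasSum_det_mul_prod hfg hM) hzero).congr_fun fun e => ?_
  exact (sum_perm_det_mul_prod f g e).symm

end CauchyBinet

section BinomialDeterminants

open scoped Nat

variable {R : Type*} {n : ℕ}

lemma prod_factorial_cast_ne_zero [CommRing R] [IsDomain R] [CharZero R] {ι : Type*}
    (s : Finset ι) (m : ι → ℕ) : ∏ i ∈ s, ((m i)! : R) ≠ 0 :=
  Finset.prod_ne_zero_iff.2 fun i _ => Nat.cast_ne_zero.2 (m i).factorial_ne_zero

lemma prod_factorial_mul_det_choose_s17 [CommRing R] [IsDomain R] (v : Fin n → ℕ) :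
    (∏ i : Fin n, ((i : ℕ)! : R)) * (Matrix.of fun k i : Fin n => ((v k).choose i : R)).det =
      (Matrix.vandermonde fun k => (v k : R)).det := by
  rw [Matrix.det_eval_matrixOfPolynomials_eq_det_vandermonde _ (fun i => descPochhammer R i)
    (fun i => descPochhammer_natDegree R i) (fun i => monic_descPochhammer R i),
    ← Matrix.det_mul_row]
  simp only [descPochhammer_eval_eq_descFactorial, Nat.descFactorial_eq_factorial_mul_choose,
    Nat.cast_mul, Matrix.of_apply]

lemma det_succ_ascFactorial [CommRing R] [IsDomain R] (v : Fin n → ℕ) :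
    (Matrix.of fun k i : Fin n => ((v k + 1).ascFactorial i : R)).det =
      (Matrix.vandermonde fun k => (v k : R)).det := by
  rw [← Matrix.det_vandermonde_add _ 1,
    Matrix.det_eval_matrixOfPolynomials_eq_det_vandermonde _ (fun i => ascPochhammer R i)
      (fun i => ascPochhammer_natDegree R i) (fun i => monic_ascPochhammer R i)]
  simp only [← ascPochhammer_nat_eq_natCast_ascFactorial, Nat.cast_add, Nat.cast_one]

lemma prod_factorial_mul_det_add_choose [CommRing R] [IsDomain R] (a : ℕ) (v : Fin n → ℕ) :
    (∏ k, ((v k)! : R)) * ((∏ i : Fin n, ((a + i)! : R)) *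
        (Matrix.of fun k i : Fin n => ((v k + (a + i)).choose (a + i) : R)).det) =
      (∏ k, ((v k + a)! : R)) * (Matrix.vandermonde fun k => (v k : R)).det := by
  have choose_mul_factorials (m i : ℕ) :
      m ! * ((a + i)! * (m + (a + i)).choose (a + i)) = (m + a)! * (m + a + 1).ascFactorial i := by
    rw [Nat.factorial_mul_ascFactorial, add_assoc, ← Nat.add_choose_mul_factorial_mul_factorial m]
    ac_rfl
  have hshift : (Matrix.vandermonde fun k => (v k : R)).det =
      (Matrix.of fun k i : Fin n => ((v k + a + 1).ascFactorial i : R)).det := by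
    rw [det_succ_ascFactorial fun k => v k + a, ← Matrix.det_vandermonde_add _ (a : R)]
    simp only [Nat.cast_add]
  rw [hshift, ← Matrix.det_mul_row, ← Matrix.det_mul_column, ← Matrix.det_mul_column]
  congr 2
  ext k i
  simpa using congrArg (Nat.cast (R := R)) (choose_mul_factorials (v k) i)

lemma det_choose_val [CommRing R] :
    (Matrix.of fun k i : Fin n => ((k : ℕ).choose i : R)).det = 1 := by
  rw [Matrix.det_of_isLowerTriangular]
  · simp
  · intro k i hki
    have hlt : k < i := OrderDual.toDual_lt_toDual.1 hki
    rw [Matrix.of_apply, Nat.choose_eq_zero_of_lt hlt, Nat.cast_zero]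

lemma det_add_choose_val [CommRing R] [IsDomain R] [CharZero R] (a : ℕ) :
    (Matrix.of fun k i : Fin n => ((a + k + i).choose i : R)).det = 1 := by
  have hdet := prod_factorial_mul_det_add_choose (R := R) 0 fun k : Fin n => a + k
  simp only [zero_add, add_zero] at hdet
  refine mul_left_cancel₀ (prod_factorial_cast_ne_zero Finset.univ fun i : Fin n => i) ?_
  calc (∏ i : Fin n, ((i : ℕ)! : R)) *
        (Matrix.of fun k i : Fin n => ((a + k + i).choose i : R)).det
      = (Matrix.vandermonde fun k : Fin n => ((a + k : ℕ) : R)).det :=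
        mul_left_cancel₀ (prod_factorial_cast_ne_zero _ _) hdet
    _ = (Matrix.vandermonde fun k : Fin n => ((k : ℕ) : R)).det := by
        simp only [Nat.cast_add, add_comm (a : R), Matrix.det_vandermonde_add]
    _ = (∏ i : Fin n, ((i : ℕ)! : R)) * 1 := by
        rw [← prod_factorial_mul_det_choose_s17, det_choose_val]

/-- Dividing column `i` by `u ^ i` only makes sense where `i ≤ v k`, but elsewhere the binomial
coefficient vanishes. -/
lemma det_choose_mul_pow [CommRing R] (u : R) {v : Fin n → ℕ} {N : ℕ}
    (hN : ∑ k, v k = N + ∑ i : Fin n, (i : ℕ)) :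
    (Matrix.of fun k i : Fin n => ((v k).choose i : R) * u ^ (v k - i)).det =
      u ^ N * (Matrix.of fun k i : Fin n => ((v k).choose i : R)).det := by
  rw [← Matrix.det_transpose, Matrix.det_apply', ← Matrix.det_transpose, Matrix.det_apply',
    Finset.mul_sum]
  refine Finset.sum_congr rfl fun σ _ => ?_
  simp only [Matrix.transpose_apply, Matrix.of_apply, Finset.prod_mul_distrib]
  by_cases hle : ∀ k, (σ k : ℕ) ≤ v k
  · have hsum : ∑ k, (v k - σ k) = N := by
      rw [Finset.sum_tsub_distrib _ fun k _ => hle k, hN,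
        Equiv.sum_comp σ fun i : Fin n => (i : ℕ), Nat.add_sub_cancel]
    rw [Finset.prod_pow_eq_pow_sum, hsum]
    ring
  · obtain ⟨k, hk⟩ := not_forall.1 hle
    have hzero : ∏ k, ((v k).choose (σ k) : R) = 0 :=
      Finset.prod_eq_zero (Finset.mem_univ k)
        (by rw [Nat.choose_eq_zero_of_lt (not_le.1 hk), Nat.cast_zero])
    simp [hzero]

lemma hasSum_choose_mul_pow_mul_choose [NormedField R] {u : R} (hu : ‖u‖ < 1) (i b : ℕ) :
    HasSum (fun m : ℕ => (m.choose i * u ^ (m - i)) * ((m + b).choose b : R))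
      ((b + i).choose i / (1 - u) ^ (b + i + 1)) := by
  have hgeom := (hasSum_choose_mul_geometric_of_norm_lt_one (b + i) hu).mul_left
    ((b + i).choose i : R)
  rw [mul_one_div] at hgeom
  rw [← (add_left_injective i).hasSum_iff]
  · refine hgeom.congr_fun fun m => ?_
    have hchoose : (m + i).choose i * (m + i + b).choose b =
        (b + i).choose i * (m + (b + i)).choose (b + i) := by
      have h := Nat.choose_mul (n := m + (b + i)) (Nat.le_add_right b i)
      rw [Nat.add_sub_cancel_left, Nat.choose_symm_add, show m + (b + i) - b = m + i by lia] at h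
      rw [mul_comm, mul_comm ((b + i).choose i), h, add_assoc, add_comm i b]
    simp only [Function.comp_apply, Nat.add_sub_cancel]
    rw [mul_right_comm, ← mul_assoc]
    exact_mod_cast congrArg (· * u ^ m) (congrArg (Nat.cast (R := R)) hchoose)
  · intro m hm
    have hlt : m < i := not_le.1 fun hle => hm ⟨m - i, Nat.sub_add_cancel hle⟩
    simp [Nat.choose_eq_zero_of_lt hlt]

lemma det_add_choose_div_one_sub_pow [Field R] [CharZero R] (a : ℕ) (u : R) :
    (Matrix.of fun i j : Fin n =>
      ((a + j + i).choose i : R) / (1 - u) ^ (a + j + i + 1)).det =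
      ((1 - u) ^ (n * (n + a)))⁻¹ := by
  have hscale : (Matrix.of fun i j : Fin n =>
      ((a + j + i).choose i : R) / (1 - u) ^ (a + j + i + 1)) =
      Matrix.of fun i j : Fin n => ((1 - u) ^ (i : ℕ))⁻¹ *
        (Matrix.of fun i j : Fin n => ((1 - u) ^ (a + j + 1))⁻¹ *
          (Matrix.of fun k i : Fin n => ((a + k + i).choose i : R)).transpose i j) i j := by
    ext i j
    simp only [Matrix.of_apply, Matrix.transpose_apply, div_eq_mul_inv]
    rw [add_right_comm _ _ 1, pow_add _ (a + j + 1 : ℕ), mul_inv]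
    ring
  have hexponent : ∑ i : Fin n, ((i : ℕ) + (a + i + 1)) = n * (n + a) := by
    rw [Fin.sum_univ_eq_sum_range fun i => i + (a + i + 1)]
    clear hscale
    induction n with
    | zero => simp
    | succ n ih => rw [Finset.sum_range_succ, ih]; ring
  rw [hscale, Matrix.det_mul_column, Matrix.det_mul_row, Matrix.det_transpose,
    det_add_choose_val, mul_one, ← Finset.prod_mul_distrib]
  simp only [← mul_inv, ← pow_add]
  rw [Finset.prod_inv_distrib, Finset.prod_pow_eq_pow_sum, hexponent]

end BinomialDeterminants

section BetaNumbers

open scoped Nat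

variable {κ μ : YoungDiagram} {p : ℕ}

lemma eq_of_rowLen_eq (h : ∀ i, κ.rowLen i = μ.rowLen i) : κ = μ := by
  ext ⟨i, j⟩
  simp only [YoungDiagram.mem_cells, YoungDiagram.mem_iff_lt_rowLen, h]

lemma lt_rowLen_iff_lt_colLen {i j : ℕ} : j < κ.rowLen i ↔ i < κ.colLen j := by
  rw [← YoungDiagram.mem_iff_lt_rowLen, YoungDiagram.mem_iff_lt_colLen]

lemma rowLen_eq_zero_iff {i : ℕ} : κ.rowLen i = 0 ↔ κ.colLen 0 ≤ i := by
  rw [← not_iff_not, ← ne_eq, ← Nat.pos_iff_ne_zero, not_le, lt_rowLen_iff_lt_colLen]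

/-- The `p` beta numbers (first column hook lengths, shifted) of `κ`, listed in increasing order:
`κ_{p-i} + i` for `0 ≤ i < p`, where `κ` is padded by zero rows. They encode the diagrams with at
most `p` rows as `p`-element sets of natural numbers. -/
def betaNumbers (p : ℕ) (κ : YoungDiagram) : Fin p ↪o ℕ :=
  OrderEmbedding.ofStrictMono (fun i => κ.rowLen i.rev + i) fun _ _ hij =>
    add_lt_add_of_le_of_lt (κ.rowLen_anti _ _ (Fin.rev_le_rev.2 hij.le)) hij

lemma betaNumbers_apply (κ : YoungDiagram) (i : Fin p) :
    betaNumbers p κ i = κ.rowLen i.rev + i := rfl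

lemma betaNumbers_injOn (p : ℕ) : Set.InjOn (betaNumbers p) {κ | κ.colLen 0 ≤ p} := by
  intro κ hκ μ hμ h
  refine eq_of_rowLen_eq fun i => ?_
  rcases lt_or_ge i p with hi | hi
  · have hi' := DFunLike.congr_fun h (Fin.rev ⟨i, hi⟩)
    simpa only [betaNumbers_apply, Fin.rev_rev, Nat.add_right_cancel_iff] using hi'
  · rw [rowLen_eq_zero_iff.2 (hκ.trans hi), rowLen_eq_zero_iff.2 (hμ.trans hi)]

lemma apply_add_sub_le_apply (e : Fin p ↪o ℕ) {i j : Fin p} (hij : i ≤ j) :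
    e i + (j - i) ≤ e j := by
  have hcard : (Finset.Ico i j).card ≤ (Finset.Ico (e i) (e j)).card :=
    Finset.card_le_card_of_injOn e (fun k hk => by simpa using hk) e.injective.injOn
  have hle := e.monotone hij
  rw [Fin.card_Ico, Nat.card_Ico] at hcard
  lia

lemma exists_rowLen_eq {r : Fin p → ℕ} (hr : Antitone r) :
    ∃ κ : YoungDiagram, κ.colLen 0 ≤ p ∧ ∀ i : Fin p, κ.rowLen i = r i := by
  refine ⟨YoungDiagram.ofRowLens (List.ofFn r) hr.sortedGE_ofFn, ?_, fun i => ?_⟩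
  · by_contra! hlt
    obtain ⟨h, -⟩ := YoungDiagram.mem_ofRowLens.1 (YoungDiagram.mem_iff_lt_colLen.2 hlt)
    simp at h
  · simpa using YoungDiagram.rowLen_ofRowLens (hw := hr.sortedGE_ofFn)
      (i.cast (List.length_ofFn (f := r)).symm)

lemma exists_betaNumbers_eq (e : Fin p ↪o ℕ) :
    ∃ κ : YoungDiagram, κ.colLen 0 ≤ p ∧ betaNumbers p κ = e := by
  have hanti : Antitone fun i : Fin p => e i.rev - i.rev := fun i j hij => by
    have := apply_add_sub_le_apply e (Fin.rev_le_rev.2 hij)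
    have : (j.rev : ℕ) ≤ i.rev := Fin.rev_le_rev.2 hij
    lia
  obtain ⟨κ, hκ, hrow⟩ := exists_rowLen_eq hanti
  refine ⟨κ, hκ, DFunLike.ext _ _ fun i => ?_⟩
  have hle := apply_add_sub_le_apply e (show ⟨0, i.pos⟩ ≤ i from Nat.zero_le _)
  rw [betaNumbers_apply, hrow, Fin.rev_rev]
  simp only at hle
  lia

/-- The classical bijection between partitions with at most `p` parts and `p`-element sets of
natural numbers. -/
def betaNumbersEquiv (p : ℕ) : {κ : YoungDiagram // κ.colLen 0 ≤ p} ≃ (Fin p ↪o ℕ) :=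
  Equiv.ofBijective (fun κ => betaNumbers p κ)
    ⟨fun κ μ h => Subtype.ext (betaNumbers_injOn p κ.2 μ.2 h), fun e =>
      let ⟨κ, hκ, h⟩ := exists_betaNumbers_eq e
      ⟨⟨κ, hκ⟩, h⟩⟩

@[to_additive]
lemma prod_cells_eq_prod_range {M : Type*} [CommMonoid M] (hκ : κ.colLen 0 ≤ p) (f : ℕ × ℕ → M) :
    ∏ c ∈ κ.cells, f c = ∏ i ∈ Finset.range p, ∏ j ∈ Finset.range (κ.rowLen i), f (i, j) := by
  refine Finset.prod_finset_product _ _ _ fun ⟨i, j⟩ => ?_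
  rw [YoungDiagram.mem_cells, YoungDiagram.mem_iff_lt_rowLen, Finset.mem_range, Finset.mem_range,
    iff_and_self]
  intro hj
  by_contra! hi
  simp [rowLen_eq_zero_iff.2 (hκ.trans hi)] at hj

@[to_additive]
lemma prod_cells_eq_prod_rev {M : Type*} [CommMonoid M] (hκ : κ.colLen 0 ≤ p) (f : ℕ × ℕ → M) :
    ∏ c ∈ κ.cells, f c =
      ∏ i : Fin p, ∏ j ∈ Finset.range (κ.rowLen i.rev), f (i.rev, j) := by
  rw [prod_cells_eq_prod_range hκ, ← Fin.prod_univ_eq_prod_range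
    fun i => ∏ j ∈ Finset.range (κ.rowLen i), f (i, j)]
  exact (Equiv.prod_comp Fin.revPerm
    fun i : Fin p => ∏ j ∈ Finset.range (κ.rowLen i), f (i, j)).symm

lemma sum_betaNumbers (hκ : κ.colLen 0 ≤ p) :
    ∑ i, betaNumbers p κ i = κ.card + ∑ i : Fin p, (i : ℕ) := by
  have hcard : κ.card = ∑ i : Fin p, κ.rowLen i.rev := by
    rw [YoungDiagram.card, Finset.card_eq_sum_ones, sum_cells_eq_sum_rev hκ]
    simp
  simp only [betaNumbers_apply, Finset.sum_add_distrib, hcard]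

end BetaNumbers

section HookProduct

open scoped Nat

variable {κ : YoungDiagram} {p : ℕ}

lemma hookLen_add_eq {i : Fin p} {j : ℕ} (hj : j < κ.rowLen i.rev) :
    hookLen κ (i.rev, j) + (p + j) = betaNumbers p κ i + κ.colLen j := by
  have hi := lt_rowLen_iff_lt_colLen.1 hj
  have := i.val_rev
  rw [hookLen, betaNumbers_apply]
  lia

lemma hookLen_row_strictAntiOn (κ : YoungDiagram) (i : ℕ) :
    StrictAntiOn (fun j => hookLen κ (i, j)) (Finset.range (κ.rowLen i)) := by
  intro j _ k hk hjk
  have hcol := κ.colLen_anti j k hjk.le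
  have hkrow := Finset.mem_range.1 hk
  have hik := lt_rowLen_iff_lt_colLen.1 hkrow
  simp only [hookLen]
  lia

lemma hookLen_ne_betaNumbers_sub {i k : Fin p} (hki : k < i) {j : ℕ} (hj : j < κ.rowLen i.rev) :
    hookLen κ (i.rev, j) ≠ betaNumbers p κ i - betaNumbers p κ k := by
  have hadd := hookLen_add_eq hj
  have hlt := (betaNumbers p κ).strictMono hki
  have hcell := lt_rowLen_iff_lt_colLen (κ := κ) (i := k.rev) (j := j)
  have hk := betaNumbers_apply κ k
  have := k.val_rev
  lia

lemma image_hookLen_subset_Ico (hκ : κ.colLen 0 ≤ p) (i : Fin p) :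
    (Finset.range (κ.rowLen i.rev)).image (fun j => hookLen κ (i.rev, j)) ⊆
      Finset.Ico 1 (betaNumbers p κ i + 1) := by
  intro m hm
  obtain ⟨j, hj, rfl⟩ := Finset.mem_image.1 hm
  have hjrow := Finset.mem_range.1 hj
  have hadd := hookLen_add_eq hjrow
  have hcol : κ.colLen j ≤ p := (κ.colLen_anti 0 j j.zero_le).trans hκ
  have hi := lt_rowLen_iff_lt_colLen.1 hjrow
  have := i.val_rev
  have := betaNumbers_apply κ i
  rw [Finset.mem_Ico]
  lia

lemma image_betaNumbers_sub_subset_Ico (κ : YoungDiagram) (i : Fin p) :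
    (Finset.Iio i).image (fun k => betaNumbers p κ i - betaNumbers p κ k) ⊆
      Finset.Ico 1 (betaNumbers p κ i + 1) := by
  intro m hm
  obtain ⟨k, hk, rfl⟩ := Finset.mem_image.1 hm
  have hlt := (betaNumbers p κ).strictMono (Finset.mem_Iio.1 hk)
  rw [Finset.mem_Ico]
  lia

/-- In a row of `κ`, the hook lengths and the differences with the smaller beta numbers partition
`{1, …, b}`, where `b` is the beta number of the row. -/
lemma prod_hookLen_row_mul_prod_sub (hκ : κ.colLen 0 ≤ p) (i : Fin p) :
    (∏ j ∈ Finset.range (κ.rowLen i.rev), hookLen κ (i.rev, j)) *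
      ∏ k ∈ Finset.Iio i, (betaNumbers p κ i - betaNumbers p κ k) = (betaNumbers p κ i)! := by
  have hhook_inj := (hookLen_row_strictAntiOn κ i.rev).injOn
  have hsub_inj : Set.InjOn (fun k => betaNumbers p κ i - betaNumbers p κ k)
      (Finset.Iio i : Finset (Fin p)) := fun k hk l _ hkl => by
    have hki := (betaNumbers p κ).strictMono (Finset.mem_Iio.1 hk)
    simp only at hkl
    exact (betaNumbers p κ).injective (by lia)
  have hdisj : Disjoint
      ((Finset.range (κ.rowLen i.rev)).image fun j => hookLen κ (i.rev, j))
      ((Finset.Iio i).image fun k => betaNumbers p κ i - betaNumbers p κ k) := by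
    rw [Finset.disjoint_left]
    simp only [Finset.mem_image, Finset.mem_range, Finset.mem_Iio]
    rintro _ ⟨j, hj, rfl⟩ ⟨k, hk, hkj⟩
    exact hookLen_ne_betaNumbers_sub hk hj hkj.symm
  have hunion := Finset.eq_of_subset_of_card_le
    (Finset.union_subset (image_hookLen_subset_Ico hκ i) (image_betaNumbers_sub_subset_Ico κ i))
    (by rw [Finset.card_union_of_disjoint hdisj, Finset.card_image_of_injOn hhook_inj,
          Finset.card_image_of_injOn hsub_inj]
        simp [betaNumbers_apply])
  rw [← Finset.prod_Ico_id_eq_factorial, ← hunion, Finset.prod_union hdisj,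
    Finset.prod_image hhook_inj, Finset.prod_image hsub_inj]

lemma hookProd_mul_det_vandermonde_s17 (hκ : κ.colLen 0 ≤ p) :
    (hookProd κ : ℝ) * (Matrix.vandermonde fun i => (betaNumbers p κ i : ℝ)).det =
      ∏ i, ((betaNumbers p κ i)! : ℝ) := by
  have hcomm : ∏ i : Fin p, ∏ j ∈ Finset.Ioi i, ((betaNumbers p κ j : ℝ) - betaNumbers p κ i) =
      ∏ i : Fin p, ∏ k ∈ Finset.Iio i, ((betaNumbers p κ i : ℝ) - betaNumbers p κ k) :=
    Finset.prod_comm' (by simp)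
  rw [hookProd, prod_cells_eq_prod_rev hκ, Matrix.det_vandermonde, hcomm, Nat.cast_prod,
    ← Finset.prod_mul_distrib]
  refine Finset.prod_congr rfl fun i _ => ?_
  rw [← prod_hookLen_row_mul_prod_sub hκ i, Nat.cast_mul]
  congr 1
  rw [Nat.cast_prod]
  refine Finset.prod_congr rfl fun k hk => ?_
  rw [Nat.cast_sub ((betaNumbers p κ).monotone (Finset.mem_Iio.1 hk).le)]

lemma factorial_mul_pochRe (n m : ℕ) : (n ! : ℝ) * pochRe (n + 1 : ℕ) m = (n + m)! := by
  rw [← Nat.factorial_mul_ascFactorial, Nat.ascFactorial_eq_prod_range, pochRe]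
  push_cast
  rfl

lemma pochPart_eq_prod_rev (hκ : κ.colLen 0 ≤ p) (x : ℝ) :
    pochPart x κ = ∏ i : Fin p, pochRe (x - (i.rev : ℕ)) (κ.rowLen i.rev) := by
  simp only [pochPart, pochRe]
  rw [← prod_cells_eq_prod_range le_rfl fun c : ℕ × ℕ => x - c.1 + c.2, prod_cells_eq_prod_rev hκ]

lemma prod_factorial_mul_pochPart (hκ : κ.colLen 0 ≤ p) (a : ℕ) :
    (∏ i : Fin p, ((a + i)! : ℝ)) * pochPart (p + a : ℕ) κ =
      ∏ i, ((betaNumbers p κ i + a)! : ℝ) := by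
  rw [pochPart_eq_prod_rev hκ, ← Finset.prod_mul_distrib]
  refine Finset.prod_congr rfl fun i _ => ?_
  have hbase : ((p + a : ℕ) : ℝ) - (i.rev : ℕ) = (a + i + 1 : ℕ) := by
    rw [sub_eq_iff_eq_add]
    norm_cast
    have := i.val_rev
    lia
  rw [hbase, factorial_mul_pochRe, betaNumbers_apply]
  congr 2
  ac_rfl

lemma pochPart_eq_zero (hκ : p < κ.colLen 0) : pochPart (p : ℝ) κ = 0 := by
  refine Finset.prod_eq_zero (Finset.mem_range.2 hκ) ?_
  rw [sub_self, pochRe]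
  exact Finset.prod_eq_zero (Finset.mem_range.2 (lt_rowLen_iff_lt_colLen.2 hκ)) (by simp)

end HookProduct

section CauchyIdentity

variable {κ : YoungDiagram} {p : ℕ} {𝕜 : Type*} [RCLike 𝕜]

lemma hookProd_ne_zero (κ : YoungDiagram) : (hookProd κ : ℝ) ≠ 0 := by
  have hmul := hookProd_mul_det_vandermonde_s17 (le_refl (κ.colLen 0))
  exact left_ne_zero_of_mul (hmul.trans_ne (prod_factorial_cast_ne_zero _ _))

lemma ofReal_det_natCast (M : Fin p → Fin p → ℕ) :
    ((Matrix.of fun i j => (M i j : ℝ)).det : 𝕜) = (Matrix.of fun i j => (M i j : 𝕜)).det := by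
  rw [← RCLike.algebraMap_eq_ofReal, RingHom.map_det]
  congr 1
  ext i j
  simp

lemma pochPart_eq_hookProd_mul_det_add_choose (hκ : κ.colLen 0 ≤ p) (a : ℕ) :
    pochPart (p + a : ℕ) κ = hookProd κ * (Matrix.of fun k i : Fin p =>
      ((betaNumbers p κ k + (a + i)).choose (a + i) : ℝ)).det := by
  have hfactorial := prod_factorial_cast_ne_zero (R := ℝ) Finset.univ fun i : Fin p => a + i
  have hvandermonde : (Matrix.vandermonde fun i => (betaNumbers p κ i : ℝ)).det ≠ 0 :=
    Matrix.det_vandermonde_ne_zero_iff.2 fun i j h =>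
      (betaNumbers p κ).injective (Nat.cast_injective h)
  have hdet := prod_factorial_mul_det_add_choose (R := ℝ) a (betaNumbers p κ)
  rw [← hookProd_mul_det_vandermonde_s17 hκ, ← prod_factorial_mul_pochPart hκ] at hdet
  refine mul_left_cancel₀ (mul_ne_zero hfactorial hvandermonde) ?_
  linear_combination -hdet

lemma pochPart_eq_hookProd_mul_det_choose (hκ : κ.colLen 0 ≤ p) :
    pochPart p κ = hookProd κ *
      (Matrix.of fun k i : Fin p => ((betaNumbers p κ k).choose i : ℝ)).det := by
  have hpoch := prod_factorial_mul_pochPart hκ 0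
  simp only [zero_add, add_zero] at hpoch
  refine mul_left_cancel₀ (prod_factorial_cast_ne_zero Finset.univ fun i : Fin p => i) ?_
  rw [hpoch, ← hookProd_mul_det_vandermonde_s17 hκ, ← prod_factorial_mul_det_choose_s17, mul_left_comm]

lemma pow_card_mul_pochPart_mul_pochPart_div_sq (hκ : κ.colLen 0 ≤ p) (a : ℕ) (u : 𝕜) :
    u ^ κ.card * (pochPart p κ : 𝕜) * (pochPart (p + a : ℕ) κ : 𝕜) / (hookProd κ : 𝕜) ^ 2 =
      (Matrix.of fun k i : Fin p =>
          ((betaNumbers p κ k).choose i : 𝕜) * u ^ (betaNumbers p κ k - i)).det *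
        (Matrix.of fun k j : Fin p =>
          ((betaNumbers p κ k + (a + j)).choose (a + j) : 𝕜)).det := by
  have hhook : (hookProd κ : 𝕜) ≠ 0 := by exact_mod_cast hookProd_ne_zero κ
  rw [det_choose_mul_pow u (sum_betaNumbers hκ), pochPart_eq_hookProd_mul_det_choose hκ,
    pochPart_eq_hookProd_mul_det_add_choose hκ, RCLike.ofReal_mul, RCLike.ofReal_mul,
    ofReal_det_natCast, ofReal_det_natCast, RCLike.ofReal_natCast]
  field_simp

lemma hasSum_orderEmbedding_det_choose_mul_det_choose {u : 𝕜} (hu : ‖u‖ < 1) (p a : ℕ) :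
    HasSum (fun e : Fin p ↪o ℕ =>
      (Matrix.of fun k i : Fin p => ((e k).choose i : 𝕜) * u ^ (e k - i)).det *
        (Matrix.of fun k j : Fin p => ((e k + (a + j)).choose (a + j) : 𝕜)).det)
      ((1 - u) ^ (p * (p + a)))⁻¹ := by
  let f (i : Fin p) (m : ℕ) : 𝕜 := m.choose i * u ^ (m - i)
  let g (j : Fin p) (m : ℕ) : 𝕜 := (m + (a + j)).choose (a + j)
  have hM (i j : Fin p) : HasSum (fun m => f i m * g j m)
      ((a + j + i).choose i / (1 - u) ^ (a + j + i + 1 : ℕ)) :=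
    hasSum_choose_mul_pow_mul_choose hu i (a + j)
  rw [← det_add_choose_div_one_sub_pow]
  exact hasSum_det_mul_det (f := f) (g := g) (fun i j => (hM i j).summable.norm) hM

lemma hasSum_pow_card_mul_pochPart_of_le {p q : ℕ} (hpq : p ≤ q) {u : 𝕜} (hu : ‖u‖ < 1) :
    HasSum (fun κ : YoungDiagram =>
      u ^ κ.card * (pochPart p κ : 𝕜) * (pochPart q κ : 𝕜) / (hookProd κ : 𝕜) ^ 2)
      ((1 - u) ^ (p * q))⁻¹ := by
  obtain ⟨a, rfl⟩ := Nat.exists_eq_add_of_le hpq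
  have hdet := (betaNumbersEquiv p).hasSum_iff.2
    (hasSum_orderEmbedding_det_choose_mul_det_choose hu p a)
  rw [← hasSum_subtype_iff_of_support_subset (s := {κ | κ.colLen 0 ≤ p})]
  · exact hdet.congr_fun fun κ => pow_card_mul_pochPart_mul_pochPart_div_sq κ.2 a u
  · refine Function.support_subset_iff'.2 fun κ hκ => ?_
    simp [pochPart_eq_zero (not_le.1 hκ)]

theorem statement17_general (p q : ℕ) {u : 𝕜} (hu : ‖u‖ < 1) :
    HasSum (fun κ : YoungDiagram =>
      u ^ κ.card * (pochPart p κ : 𝕜) * (pochPart q κ : 𝕜) / (hookProd κ : 𝕜) ^ 2)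
      ((1 - u) ^ (p * q))⁻¹ := by
  rcases le_total p q with hpq | hqp
  · exact hasSum_pow_card_mul_pochPart_of_le hpq hu
  · rw [mul_comm p q]
    refine (hasSum_pow_card_mul_pochPart_of_le hqp hu).congr_fun fun κ => ?_
    rw [mul_right_comm]

end CauchyIdentity

/-- the Cauchy-type identity
`Σ_κ u^{|κ|} (p)_κ (q)_κ / (h^κ)² = (1 − u)^{−pq}` for `|u| < 1`, the series
converging absolutely. -/
theorem statement17 (p q : ℕ) (hp : 1 ≤ p) (hq : 1 ≤ q) (u : ℝ) (hu : |u| < 1) :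
    Summable (fun κ : YoungDiagram =>
      u ^ κ.card * pochPart (p : ℝ) κ * pochPart (q : ℝ) κ / (hookProd κ : ℝ) ^ 2) ∧
    (∑' κ : YoungDiagram,
      u ^ κ.card * pochPart (p : ℝ) κ * pochPart (q : ℝ) κ / (hookProd κ : ℝ) ^ 2) =
      ((1 - u) ^ (p * q))⁻¹ := by
  have hsum := statement17_general p q (u := u) hu
  exact ⟨hsum.summable, hsum.tsum_eq⟩

end
end
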